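/- Let 0 < a < b with a < |q|·b and let m ≥ 3 be an integer. For δ > 0 set S_δ := {(z,ξ) ∈ ℂ² : a ≤ |z| ≤ b, |z·exp(2πiτξ)| ≤ δ} and S'_δ := {(z,ξ) ∈ ℂ² : |q|·a ≤ |z| ≤ b, |z·exp(2πiτξ)| ≤ δ}. Then there exist δ₀ > 0 and C > 0, depending only on τ, m, a, b, such that for every 0 < δ ≤ δ₀ and every Δ holomorphic on S_δ with ‖Δ‖_m := sup_{(z,ξ)∈S_δ} |Δ(z,ξ)|·|ξ|^m < ∞, there is a unique bounded holomorphic function h on S'_δ satisfying both (1) h(q·z, ξ−1) − h(z,ξ) = Δ(z,ξ) for all (z,ξ) ∈ S_δ, and (3') sup of |h(z,ξ)|·√(Im ξ) over {(z,ξ) ∈ S'_δ : Im ξ ≥ 1} is finite. Moreover this h satisfies sup_{S'_δ} |h| ≤ C·‖Δ‖_m and |h(z,ξ)| ≤ C·‖Δ‖_m/√(Im ξ) for every (z,ξ) ∈ S'_δ with Im ξ ≥ 1; and for every θ ∈ (0, π/2] there is D_θ > 0, depending only on θ (for the fixed τ, m, a, b), with |h(z,ξ)| ≤ D_θ·‖Δ‖_m/|ξ|^{m−2}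 for every (z,ξ) ∈ S'_δ with θ − ϖ ≤ arg ξ ≤ π − θ − ϖ. -/

import Mathlib

open Complex

/-- The domain `S_δ = {(z,ξ) : a ≤ |z| ≤ b, |z·exp(2πiτξ)| ≤ δ}`. -/
noncomputable def sectDom (τ : ℂ) (a b δ : ℝ) : Set (ℂ × ℂ) :=
  {p : ℂ × ℂ | a ≤ ‖p.1‖ ∧ ‖p.1‖ ≤ b ∧
    ‖p.1 * Complex.exp (2 * (Real.pi : ℂ) * Complex.I * τ * p.2)‖ ≤ δ}

/-- The enlarged domain `S'_δ = {(z,ξ) : |q|·a ≤ |z| ≤ b, |z·exp(2πiτξ)| ≤ δ}`,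
`q = exp(2πiτ)`. -/
noncomputable def sectDom' (τ : ℂ) (a b δ : ℝ) : Set (ℂ × ℂ) :=
  {p : ℂ × ℂ |
    ‖Complex.exp (2 * (Real.pi : ℂ) * Complex.I * τ)‖ * a ≤ ‖p.1‖ ∧
    ‖p.1‖ ≤ b ∧
    ‖p.1 * Complex.exp (2 * (Real.pi : ℂ) * Complex.I * τ * p.2)‖ ≤ δ}

/-- Properties of the solution `h` of statement 14: bounded holomorphic on `S'_δ`, solving
`h(q·z, ξ−1) − h(z,ξ) = Δ(z,ξ)` on `S_δ` (equation (1)), and with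
`sup |h|·√(Im ξ)` finite on `{Im ξ ≥ 1}` (condition (3')). -/
noncomputable def linSolProp (τ : ℂ) (a b δ : ℝ) (Δ h : ℂ × ℂ → ℂ) : Prop :=
  ContinuousOn h (sectDom' τ a b δ) ∧
  DifferentiableOn ℂ h (interior (sectDom' τ a b δ)) ∧
  (∃ M : ℝ, ∀ p ∈ sectDom' τ a b δ, ‖h p‖ ≤ M) ∧
  (∀ p ∈ sectDom τ a b δ,
    h (Complex.exp (2 * (Real.pi : ℂ) * Complex.I * τ) * p.1, p.2 - 1) - h p = Δ p) ∧
  (∃ M : ℝ, ∀ p ∈ sectDom' τ a b δ, 1 ≤ p.2.im →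
    ‖h p‖ * Real.sqrt p.2.im ≤ M)

/-!
The flow `(z, ξ) ↦ (z exp (-2πiu), ξ + u/τ)` preserves `z exp (2πiτξ)`, and its time `-τ` map is
`(z, ξ) ↦ (qz, ξ - 1)`. On each leaf `S'_δ` is therefore a horizontal strip in the complex time
`u`, and the equation becomes the difference equation `g (u - τ) - g u = Δ u`. It is solved by
integrating `Δ` against the `τ`-periodic Cauchy kernel along a horizontal line: moving the line
across a pole changes the integral by the residue `Δ`, which gives the equation and also makes two
such integrals, corrected by residues, fit together on the whole strip. The decay of order `m`
splits into an integrable factor of order `2` and a weight of order `m - 2`. The smallest value of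
this weight on the leaf gives the sectorial estimate; together with the decay of the kernel it
gives the bound for large `Im ξ`. Finally, the difference of two solutions extends from the strip
to a bounded entire function of `u`, so it is constant on leaves, and decay as `Im ξ → ∞` forces
it to vanish.
-/

namespace Sectorial

open Filter Topology Set MeasureTheory Interval

/-! ### Contour integrals along a horizontal strip -/

/-- The filter of the two ends of the closed strip `y₁ ≤ Im u ≤ y₂`: `|Re u| → ∞` inside the
strip. -/
def stripEnds (y₁ y₂ : ℝ) : Filter ℂ :=
  comap re (cocompact ℝ) ⊓ 𝓟 (im ⁻¹' Icc y₁ y₂)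

section Strip

variable {y₁ y₂ : ℝ} {f : ℂ → ℂ}

theorem tendsto_integral_vertical_zero {ι : Type*} {l : Filter ι} {x : ι → ℝ} (hy : y₁ ≤ y₂)
    (hf : Tendsto f (stripEnds y₁ y₂) (𝓝 0)) (hx : Tendsto x l (cocompact ℝ)) :
    Tendsto (fun i => ∫ y in y₁..y₂, f (x i + y * I)) l (𝓝 0) := by
  refine Metric.tendsto_nhds.2 fun ε hε => ?_
  have hlen : 0 < |y₂ - y₁| + 1 := by positivity
  have hsmall : ∀ᶠ u in stripEnds y₁ y₂, ‖f u‖ < ε / (|y₂ - y₁| + 1) := by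
    simpa using Metric.tendsto_nhds.1 hf _ (div_pos hε hlen)
  rw [stripEnds, eventually_inf_principal, eventually_comap] at hsmall
  filter_upwards [hx.eventually hsmall] with i hi
  have hbound : ∀ y ∈ Ι y₁ y₂, ‖f (x i + y * I)‖ ≤ ε / (|y₂ - y₁| + 1) := fun y hy' => by
    rw [uIoc_of_le hy] at hy'
    exact (hi _ (by simp) (by simpa using Ioc_subset_Icc_self hy')).le
  calc dist (∫ y in y₁..y₂, f (x i + y * I)) 0
      ≤ ε / (|y₂ - y₁| + 1) * |y₂ - y₁| := by
        simpa using intervalIntegral.norm_integral_le_of_norm_le_const hbound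
    _ < ε / (|y₂ - y₁| + 1) * (|y₂ - y₁| + 1) := by gcongr; linarith
    _ = ε := div_mul_cancel₀ ε hlen.ne'

theorem tendsto_integral_sub_integral_zero_of_strip (hy : y₁ ≤ y₂)
    (hc : ContinuousOn f (im ⁻¹' Icc y₁ y₂)) (hd : DifferentiableOn ℂ f (im ⁻¹' Ioo y₁ y₂))
    (hf : Tendsto f (stripEnds y₁ y₂) (𝓝 0)) :
    Tendsto (fun R : ℝ => (∫ x in -R..R, f (x + y₁ * I)) - ∫ x in -R..R, f (x + y₂ * I))
      atTop (𝓝 0) := by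
  have hrect (R : ℝ) : (∫ x in -R..R, f (x + y₁ * I)) - (∫ x in -R..R, f (x + y₂ * I)) =
      I * (∫ y in y₁..y₂, f ((-R : ℝ) + y * I)) - I * ∫ y in y₁..y₂, f (R + y * I) := by
    have h := integral_boundary_rect_eq_zero_of_differentiable_on_off_countable f
      (-R + y₁ * I) (R + y₂ * I) ∅ countable_empty
      (hc.mono fun u hu => by simpa [uIcc_of_le hy] using (mem_reProdIm.1 hu).2)
      (fun u hu => (hd u (by simpa [hy] using (mem_reProdIm.1 hu.1).2)).differentiableAt
        ((isOpen_Ioo.preimage continuous_im).mem_nhds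
          (by simpa [hy] using (mem_reProdIm.1 hu.1).2)))
    simp only [add_re, neg_re, ofReal_re, mul_re, I_re, mul_zero, ofReal_im, I_im, mul_one,
      sub_self, add_zero, add_im, neg_im, neg_zero, mul_im, zero_add, smul_eq_mul] at h
    linear_combination h
  have hleft : Tendsto (fun R : ℝ => ∫ y in y₁..y₂, f ((-R : ℝ) + y * I)) atTop (𝓝 0) :=
    tendsto_integral_vertical_zero hy hf (tendsto_neg_atTop_atBot.mono_right atBot_le_cocompact)
  have hright : Tendsto (fun R : ℝ => ∫ y in y₁..y₂, f (R + y * I)) atTop (𝓝 0) :=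
    tendsto_integral_vertical_zero hy hf (tendsto_id.mono_right atTop_le_cocompact)
  simpa [hrect] using (hleft.const_mul I).sub (hright.const_mul I)

theorem tendsto_re_stripEnds : Tendsto re (stripEnds y₁ y₂) (cocompact ℝ) :=
  tendsto_comap.mono_left inf_le_left

theorem tendsto_inv_stripEnds : Tendsto (fun u : ℂ => u⁻¹) (stripEnds y₁ y₂) (𝓝 0) :=
  tendsto_inv₀_cobounded.comp <| tendsto_norm_atTop_iff_cobounded.1 <|
    tendsto_atTop_mono abs_re_le_norm (tendsto_norm_cocompact_atTop.comp tendsto_re_stripEnds)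

theorem integral_inv_add_mul_I {y : ℝ} (hy : y ≠ 0) (R : ℝ) :
    ∫ x in -R..R, ((x : ℂ) + y * I)⁻¹ = -2 * I * Real.arctan (R / y) := by
  have hne (x : ℝ) : (x : ℂ) + y * I ≠ 0 := fun h => hy (by simpa using congrArg im h)
  have hint : IntervalIntegrable (fun x : ℝ => ((x : ℂ) + y * I)⁻¹) volume (-R) R :=
    Continuous.intervalIntegrable (by fun_prop (disch := exact hne _)) _ _
  have hrefl : ∫ x in -R..R, ((x : ℂ) + y * I)⁻¹ = ∫ x in -R..R, ((-x : ℝ) + y * I : ℂ)⁻¹ := by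
    simpa using (intervalIntegral.integral_comp_neg (a := -R) (b := R)
      fun x : ℝ => ((x : ℂ) + y * I)⁻¹).symm
  have heven (x : ℝ) : ((x : ℂ) + y * I)⁻¹ + ((-x : ℝ) + y * I : ℂ)⁻¹ =
      -2 * I * (y / (y ^ 2 + x ^ 2) : ℝ) := by
    have h₁ := hne x
    have h₂ := hne (-x)
    have h₃ : (y : ℂ) ^ 2 + x ^ 2 ≠ 0 := mod_cast (by positivity : y ^ 2 + x ^ 2 ≠ 0)
    push_cast at h₂ ⊢
    field_simp
    linear_combination 2 * I * y * (y ^ 2 * I_sq)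
  have harctan : ∫ x in -R..R, y / (y ^ 2 + x ^ 2) = 2 * Real.arctan (R / y) := by
    have hscale (x : ℝ) : y / (y ^ 2 + x ^ 2) = y⁻¹ * (1 + (x / y) ^ 2)⁻¹ := by field_simp
    simp only [hscale, intervalIntegral.integral_const_mul]
    rw [intervalIntegral.integral_comp_div (fun x => (1 + x ^ 2)⁻¹) hy, integral_inv_one_add_sq,
      neg_div, Real.arctan_neg, smul_eq_mul]
    field_simp
    ring
  have hdouble : (∫ x in -R..R, ((x : ℂ) + y * I)⁻¹) + ∫ x in -R..R, ((x : ℂ) + y * I)⁻¹ =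
      -2 * I * (2 * Real.arctan (R / y) : ℝ) := by
    nth_rw 2 [hrefl]
    rw [← intervalIntegral.integral_add hint (Continuous.intervalIntegrable
      (by fun_prop (disch := exact fun x => hne (-x))) _ _)]
    simp only [heven, intervalIntegral.integral_const_mul, intervalIntegral.integral_ofReal,
      harctan]
  rw [ofReal_mul, ofReal_ofNat] at hdouble
  linear_combination hdouble / 2

theorem tendsto_integral_inv_sub_integral_inv (hy₁ : y₁ < 0) (hy₂ : 0 < y₂) :
    Tendsto (fun R : ℝ =>
        (∫ x in -R..R, ((x : ℂ) + y₁ * I)⁻¹) - ∫ x in -R..R, ((x : ℂ) + y₂ * I)⁻¹)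
      atTop (𝓝 (2 * Real.pi * I)) := by
  have hbot : Tendsto (fun R : ℝ => (Real.arctan (R / y₁) : ℂ)) atTop
      (𝓝 ((-(Real.pi / 2) : ℝ) : ℂ)) :=
    (continuous_ofReal.tendsto _).comp ((Real.tendsto_arctan_atBot.mono_right
      nhdsWithin_le_nhds).comp (tendsto_id.atTop_div_const_of_neg hy₁))
  have htop : Tendsto (fun R : ℝ => (Real.arctan (R / y₂) : ℂ)) atTop
      (𝓝 ((Real.pi / 2 : ℝ) : ℂ)) :=
    (continuous_ofReal.tendsto _).comp ((Real.tendsto_arctan_atTop.mono_right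
      nhdsWithin_le_nhds).comp (tendsto_id.atTop_div_const hy₂))
  simp only [integral_inv_add_mul_I hy₁.ne, integral_inv_add_mul_I hy₂.ne']
  convert (hbot.const_mul (-2 * I)).sub (htop.const_mul (-2 * I)) using 2
  push_cast
  ring

theorem exists_holomorphic_sub_simplePole {s t : Set ℂ} {c : ℂ} (hs : s ∈ 𝓝 0) (ht : t ∈ 𝓝 0)
    (hc : ContinuousOn f (s \ {0})) (hd : DifferentiableOn ℂ f (t \ {0}))
    (hres : Tendsto (fun u => u * f u) (𝓝[≠] 0) (𝓝 c)) :
    ∃ g : ℂ → ℂ, ContinuousOn g s ∧ DifferentiableOn ℂ g t ∧ ∀ u ≠ 0, g u = f u - c * u⁻¹ := by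
  let N : ℂ → ℂ := Function.update (fun u => u * f u) 0 c
  have hN {u : ℂ} (hu : u ≠ 0) : N u = u * f u := Function.update_of_ne hu _ _
  have hN₀ : N 0 = c := Function.update_self _ _ _
  have hNd : DifferentiableOn ℂ N t :=
    (differentiableOn_compl_singleton_and_continuousAt_iff ht).1
      ⟨(differentiableOn_id.mul hd).congr fun u hu => hN hu.2, continuousAt_update_same.2 hres⟩
  have hNc : ContinuousOn N s :=
    continuousOn_update_iff.2 ⟨continuousOn_id.mul hc, fun _ => hres.mono_left
      (nhdsWithin_mono _ fun _ h => h.2)⟩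
  refine ⟨dslope N 0, (continuousOn_dslope hs).2 ⟨hNc, hNd.differentiableAt ht⟩,
    (differentiableOn_dslope ht).2 hNd, fun u hu => ?_⟩
  rw [dslope_of_ne _ hu, slope_def_field, hN hu, hN₀]
  field_simp
  ring

theorem integral_sub_integral_eq_residue_of_strip {c : ℂ} (hy₁ : y₁ < 0) (hy₂ : 0 < y₂)
    (hc : ContinuousOn f (im ⁻¹' Icc y₁ y₂ \ {0}))
    (hd : DifferentiableOn ℂ f (im ⁻¹' Ioo y₁ y₂ \ {0}))
    (hres : Tendsto (fun u => u * f u) (𝓝[≠] 0) (𝓝 c))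
    (hf : Tendsto f (stripEnds y₁ y₂) (𝓝 0))
    (hi₁ : Integrable fun x : ℝ => f (x + y₁ * I))
    (hi₂ : Integrable fun x : ℝ => f (x + y₂ * I)) :
    (∫ x : ℝ, f (x + y₁ * I)) - ∫ x : ℝ, f (x + y₂ * I) = 2 * Real.pi * I * c := by
  have hIoo : im ⁻¹' Ioo y₁ y₂ ∈ 𝓝 (0 : ℂ) :=
    (isOpen_Ioo.preimage continuous_im).mem_nhds ⟨hy₁, hy₂⟩
  have hIcc : im ⁻¹' Icc y₁ y₂ ∈ 𝓝 (0 : ℂ) :=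
    mem_of_superset hIoo fun _ h => Ioo_subset_Icc_self h
  obtain ⟨g, hgc, hgd, hg⟩ := exists_holomorphic_sub_simplePole hIcc hIoo hc hd hres
  have hg_ends : Tendsto g (stripEnds y₁ y₂) (𝓝 0) := by
    have hne : ∀ᶠ u in stripEnds y₁ y₂, u ≠ 0 :=
      (tendsto_re_stripEnds.eventually (isCompact_singleton (x := 0)).compl_mem_cocompact).mono
        fun u hu h => hu (by simp [h])
    simpa using (hf.sub (tendsto_inv_stripEnds.const_mul c)).congr'
      (hne.mono fun u h => (hg u h).symm)
  have hg_lim := tendsto_integral_sub_integral_zero_of_strip (hy₁.trans hy₂).le hgc hgd hg_ends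
  have hsplit {y : ℝ} (hy : y ≠ 0) (hi : Integrable fun x : ℝ => f (x + y * I)) (R : ℝ) :
      ∫ x in -R..R, f (x + y * I) =
        (∫ x in -R..R, g (x + y * I)) + c * ∫ x in -R..R, ((x : ℂ) + y * I)⁻¹ := by
    have hne (x : ℝ) : (x : ℂ) + y * I ≠ 0 := fun h => hy (by simpa using congrArg im h)
    simp only [hg _ (hne _)]
    rw [intervalIntegral.integral_sub hi.intervalIntegrable (Continuous.intervalIntegrable
      (by fun_prop (disch := exact hne)) _ _), intervalIntegral.integral_const_mul,
      sub_add_cancel]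
  have hlim {y : ℝ} (hi : Integrable fun x : ℝ => f (x + y * I)) :
      Tendsto (fun R : ℝ => ∫ x in -R..R, f (x + y * I)) atTop (𝓝 (∫ x : ℝ, f (x + y * I))) :=
    intervalIntegral_tendsto_integral hi tendsto_neg_atTop_atBot tendsto_id
  refine tendsto_nhds_unique ((hlim hi₁).sub (hlim hi₂)) ?_
  convert hg_lim.add ((tendsto_integral_inv_sub_integral_inv hy₁ hy₂).const_mul c) using 2
  · rw [hsplit hy₁.ne hi₁, hsplit hy₂.ne' hi₂]
    ring
  · ring

end Strip

/-! ### A Liouville theorem on strips -/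

section Liouville

variable {g : ℂ → ℂ} {τ : ℂ} {A B : ℝ}

theorem apply_sub_intCast_mul_of_periodic_on_strip (hτ : 0 < τ.im)
    (hper : ∀ u, A + τ.im ≤ u.im → u.im ≤ B → g (u - τ) = g u) (k : ℤ) {u : ℂ}
    (hu : u.im ∈ Icc A B) (hk : u.im - k * τ.im ∈ Icc A B) : g (u - k * τ) = g u := by
  have hnat (n : ℕ) : ∀ u : ℂ, A + n * τ.im ≤ u.im → u.im ≤ B → g (u - n * τ) = g u := by
    induction n with
    | zero => simp
    | succ n ih =>
      intro u hA hB
      push_cast at hA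
      have him : (u - n * τ).im = u.im - n * τ.im := by simp
      have hn : 0 ≤ n * τ.im := by positivity
      rw [← ih u (by linarith) hB, ← hper (u - n * τ) (by linarith) (by linarith)]
      congr 1
      push_cast
      ring
  obtain ⟨n, rfl | rfl⟩ := k.eq_nat_or_neg
  · push_cast at hk ⊢
    exact hnat n u (by linarith [hk.1]) hu.2
  · push_cast at hk ⊢
    have him : (u - -n * τ).im = u.im - -n * τ.im := by simp
    rw [← hnat n (u - -n * τ) (by linarith [hu.1]) (him ▸ hk.2)]
    congr 1
    ring

theorem eq_of_periodic_of_bounded_on_strip {M : ℝ} (hτ : 0 < τ.im) (hAB : τ.im < B - A)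
    (hd : DifferentiableOn ℂ g (im ⁻¹' Ioo A B)) (hb : ∀ u, u.im ∈ Icc A B → ‖g u‖ ≤ M)
    (hper : ∀ u, A + τ.im ≤ u.im → u.im ≤ B → g (u - τ) = g u)
    {u v : ℂ} (hu : u.im ∈ Icc A B) (hv : v.im ∈ Icc A B) : g u = g v := by
  let c := (A + B - τ.im) / 2
  let n (u : ℂ) : ℤ := toIcoDiv hτ c u.im
  let G (u : ℂ) : ℂ := g (u - n u * τ)
  have him (u : ℂ) (k : ℤ) : (u - k * τ).im = u.im - k * τ.im := by simp
  have hn (u : ℂ) : u.im - n u * τ.im ∈ Ioo A B := by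
    have h := sub_toIcoDiv_zsmul_mem_Ico hτ c u.im
    rw [zsmul_eq_mul] at h
    constructor <;> simp only [c, n] at h ⊢ <;> linarith [h.1, h.2]
  have hG (k : ℤ) {u : ℂ} (hk : u.im - k * τ.im ∈ Icc A B) : G u = g (u - k * τ) := by
    have h := apply_sub_intCast_mul_of_periodic_on_strip hτ hper (n u - k) (u := u - k * τ)
      (him u k ▸ hk) (by
        rw [him]
        push_cast
        convert Ioo_subset_Icc_self (hn u) using 1
        ring)
    rw [← h]
    simp only [G]
    congr 1
    push_cast
    ring
  have hGd : Differentiable ℂ G := fun u₀ => by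
    have hnear : ∀ᶠ u : ℂ in 𝓝 u₀, u.im - n u₀ * τ.im ∈ Ioo A B :=
      (by fun_prop : Continuous fun u : ℂ => u.im - n u₀ * τ.im).continuousAt.eventually
        (Ioo_mem_nhds (hn u₀).1 (hn u₀).2)
    have hdiff : DifferentiableAt ℂ g (u₀ - n u₀ * τ) :=
      hd.differentiableAt ((isOpen_Ioo.preimage continuous_im).mem_nhds
        (by simpa only [mem_preimage, him] using hn u₀))
    exact (hdiff.comp u₀ (differentiableAt_id.sub_const _)).congr_of_eventuallyEq
      (hnear.mono fun u hu => hG (n u₀) (Ioo_subset_Icc_self hu))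
  have hGb : Bornology.IsBounded (range G) := isBounded_iff_forall_norm_le.2
    ⟨M, forall_mem_range.2 fun u => hb _ (him u _ ▸ Ioo_subset_Icc_self (hn u))⟩
  simpa [hG 0 (by simpa using hu), hG 0 (by simpa using hv)] using
    hGd.apply_eq_apply_of_bounded hGb u v

end Liouville

/-! ### Holomorphic dependence of an integral on parameters -/

section ParametricIntegral

variable {X E G : Type*} [MeasurableSpace X] {μ : Measure X}

theorem aestronglyMeasurable_clm_of_forall_apply {𝕜 : Type*} [NontriviallyNormedField 𝕜]
    [CompleteSpace 𝕜] [NormedAddCommGroup E] [NormedSpace 𝕜 E] [FiniteDimensional 𝕜 E]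
    [NormedAddCommGroup G] [NormedSpace 𝕜 G] {L : X → E →L[𝕜] G}
    (hL : ∀ v, AEStronglyMeasurable (fun x => L x v) μ) : AEStronglyMeasurable L μ := by
  let b := Module.finBasis 𝕜 E
  let coord (i) : E →L[𝕜] 𝕜 := LinearMap.toContinuousLinearMap (b.coord i)
  have hsum (x : X) : L x = ∑ i, ContinuousLinearMap.smulRightL 𝕜 E G (coord i) (L x (b i)) := by
    ext v
    conv_lhs => rw [← b.sum_repr v, map_sum]
    simp [coord]
  rw [funext hsum]
  exact Finset.aestronglyMeasurable_fun_sum _ fun i _ =>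
    (ContinuousLinearMap.continuous _).comp_aestronglyMeasurable (hL (b i))

theorem aestronglyMeasurable_fderiv_of_eventually {𝕜 : Type*} [RCLike 𝕜] [NormedAddCommGroup E]
    [NormedSpace 𝕜 E] [FiniteDimensional 𝕜 E] [NormedAddCommGroup G] [NormedSpace 𝕜 G]
    {F : E → X → G} {p : E} (hm : ∀ᶠ q in 𝓝 p, AEStronglyMeasurable (F q) μ)
    (hd : ∀ᵐ x ∂μ, DifferentiableAt 𝕜 (F · x) p) :
    AEStronglyMeasurable (fun x => fderiv 𝕜 (F · x) p) μ := by
  refine aestronglyMeasurable_clm_of_forall_apply fun v => ?_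
  have hlim : Tendsto (fun n : ℕ => p + (n : 𝕜)⁻¹ • v) atTop (𝓝 p) := by
    simpa using ((tendsto_inv_atTop_nhds_zero_nat (𝕜 := 𝕜)).smul_const v).const_add p
  obtain ⟨n₀, hn₀⟩ := eventually_atTop.1 (hlim.eventually hm)
  refine aestronglyMeasurable_of_tendsto_ae atTop
    (f := fun n x => ((n + n₀ : ℕ) : 𝕜) • (F (p + ((n + n₀ : ℕ) : 𝕜)⁻¹ • v) x - F p x))
    (fun n => ((hn₀ _ le_add_self).sub hm.self_of_nhds).const_smul _) ?_
  filter_upwards [hd] with x hx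
  refine hx.hasFDerivAt.lim v ?_
  simpa only [RCLike.norm_natCast, Function.comp_def] using
    tendsto_natCast_atTop_atTop.comp (tendsto_add_atTop_nat n₀)

theorem differentiableAt_integral_of_dominated [NormedAddCommGroup E] [NormedSpace ℂ E]
    [FiniteDimensional ℂ E] [NormedAddCommGroup G] [NormedSpace ℂ G] {F : E → X → G} {p : E}
    {R : ℝ} {bound : X → ℝ} (hR : 0 < R)
    (hm : ∀ q ∈ Metric.ball p R, AEStronglyMeasurable (F q) μ)
    (hd : ∀ᵐ x ∂μ, DifferentiableOn ℂ (F · x) (Metric.ball p R))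
    (hb : ∀ᵐ x ∂μ, ∀ q ∈ Metric.ball p R, ‖F q x‖ ≤ bound x) (hi : Integrable bound μ) :
    DifferentiableAt ℂ (fun q => ∫ x, F q x ∂μ) p := by
  have hp : p ∈ Metric.ball p R := Metric.mem_ball_self hR
  have hnear : ∀ᶠ q in 𝓝 p, q ∈ Metric.ball p R := Metric.ball_mem_nhds p hR
  have hdAt : ∀ᵐ x ∂μ, ∀ q ∈ Metric.ball p R, DifferentiableAt ℂ (F · x) q :=
    hd.mono fun x hx q hq => hx.differentiableAt (Metric.isOpen_ball.mem_nhds hq)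
  have hsub {q : E} (hq : q ∈ Metric.ball p (R / 2)) : Metric.ball q (R / 2) ⊆ Metric.ball p R :=
    Metric.ball_subset_ball' (by linarith [Metric.mem_ball.1 hq])
  refine (hasFDerivAt_integral_of_dominated_of_fderiv_le (𝕜 := ℂ)
    (F' := fun q x => fderiv ℂ (F · x) q) (bound := fun x => 2 * bound x / (R / 2))
    (Metric.ball_mem_nhds p (half_pos hR)) (hnear.mono hm)
    (hi.mono' (hm p hp) (hb.mono fun x hx => hx p hp))
    (aestronglyMeasurable_fderiv_of_eventually (hnear.mono hm) (hdAt.mono fun x hx => hx p hp))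
    ?_ ((hi.const_mul 2).div_const _) ?_).differentiableAt
  · filter_upwards [hd, hb] with x hxd hxb q hq
    refine norm_fderiv_le_div_of_mapsTo_ball (hxd.mono (hsub hq)) (fun q' hq' => ?_) (half_pos hR)
    rw [mem_closedBall_iff_norm]
    linarith [norm_sub_le (F q' x) (F q x), hxb q' (hsub hq hq'),
      hxb q (hsub hq (Metric.mem_ball_self (half_pos hR)))]
  · filter_upwards [hdAt] with x hx q hq
    exact (hx q (hsub hq (Metric.mem_ball_self (half_pos hR)))).hasFDerivAt

end ParametricIntegral

/-! ### The flow and sectors in logarithmic coordinates -/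

section

/-- The logarithmic scale `log r / 2π` in which `|exp (2πiu)|` becomes `-Im u`. -/
noncomputable def logScale (r : ℝ) : ℝ := Real.log r / (2 * Real.pi)

/-- The logarithmic height of a point `(z, ξ)`, read off `|z|`. -/
noncomputable def height (p : ℂ × ℂ) : ℝ := logScale ‖p.1‖

/-- The logarithm of `|z exp (2πiτξ)|`, a first integral of `flow τ`. -/
noncomputable def level (τ : ℂ) (p : ℂ × ℂ) : ℝ := height p - (τ * p.2).im

/-- The complex flow `(z, ξ) ↦ (z exp (-2πiu), ξ + u/τ)`; its time `-τ` map is the deck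
transformation `(z, ξ) ↦ (qz, ξ - 1)`. -/
noncomputable def flow (τ u : ℂ) (p : ℂ × ℂ) : ℂ × ℂ :=
  (p.1 * exp (-(2 * Real.pi * I * u)), p.2 + u / τ)

/-- The sectorial domain `α ≤ height ≤ β`, `level τ ≤ σ`. The condition `z ≠ 0` removes the points
at which `height` takes a junk value. -/
def logSector (τ : ℂ) (α β σ : ℝ) : Set (ℂ × ℂ) :=
  {p | p.1 ≠ 0 ∧ height p ∈ Icc α β ∧ level τ p ≤ σ}

variable {τ : ℂ} {α β σ : ℝ} {p : ℂ × ℂ}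

theorem ne_zero_of_im_pos (hτ : 0 < τ.im) : τ ≠ 0 := by
  rintro rfl
  simp at hτ

theorem logScale_le_logScale {r s : ℝ} (hr : 0 < r) (hs : 0 < s) :
    logScale r ≤ logScale s ↔ r ≤ s := by
  rw [logScale, logScale, div_le_div_iff_of_pos_right Real.two_pi_pos, Real.log_le_log_iff hr hs]

theorem logScale_lt_logScale {r s : ℝ} (hr : 0 < r) (hs : 0 < s) :
    logScale r < logScale s ↔ r < s := by
  rw [logScale, logScale, div_lt_div_iff_of_pos_right Real.two_pi_pos, Real.log_lt_log_iff hr hs]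

theorem logScale_mul {r s : ℝ} (hr : r ≠ 0) (hs : s ≠ 0) :
    logScale (r * s) = logScale r + logScale s := by
  rw [logScale, Real.log_mul hr hs, add_div, logScale, logScale]

theorem logScale_exp (σ : ℝ) : logScale (Real.exp (2 * Real.pi * σ)) = σ := by
  rw [logScale, Real.log_exp, mul_div_cancel_left₀ _ Real.two_pi_pos.ne']

theorem logScale_norm_exp (u : ℂ) : logScale ‖exp (2 * Real.pi * I * u)‖ = -u.im := by
  have hre : (2 * Real.pi * I * u).re = 2 * Real.pi * -u.im := by simp
  rw [norm_exp, hre, logScale_exp]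

theorem sectDom_eq_logSector (τ : ℂ) {a b δ : ℝ} (ha : 0 < a) (hb : 0 < b) (hδ : 0 < δ) :
    sectDom τ a b δ = logSector τ (logScale a) (logScale b) (logScale δ) := by
  ext p
  rcases eq_or_ne p.1 0 with hp | hp
  · simp [sectDom, logSector, hp, ha]
  have hz : 0 < ‖p.1‖ := norm_pos_iff.2 hp
  have hlevel : level τ p = logScale ‖p.1 * exp (2 * Real.pi * I * τ * p.2)‖ := by
    rw [norm_mul, logScale_mul hz.ne' (norm_ne_zero_iff.2 (exp_ne_zero _)), mul_assoc _ τ,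
      logScale_norm_exp, level, height, sub_eq_add_neg]
  simp only [sectDom, logSector, mem_ofPred_eq, mem_Icc, hlevel, height, hp, ne_eq, not_false_iff,
    true_and, and_assoc, logScale_le_logScale ha hz, logScale_le_logScale hz hb,
    logScale_le_logScale (norm_pos_iff.2 (mul_ne_zero hp (exp_ne_zero _))) hδ]

theorem logScale_norm_exp_mul (τ : ℂ) {a : ℝ} (ha : 0 < a) :
    logScale (‖exp (2 * Real.pi * I * τ)‖ * a) = logScale a - τ.im := by
  rw [logScale_mul (norm_ne_zero_iff.2 (exp_ne_zero _)) ha.ne', logScale_norm_exp]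
  ring

theorem sectDom'_eq_logSector (τ : ℂ) {a b δ : ℝ} (ha : 0 < a) (hb : 0 < b) (hδ : 0 < δ) :
    sectDom' τ a b δ = logSector τ (logScale a - τ.im) (logScale b) (logScale δ) := by
  rw [← logScale_norm_exp_mul τ ha,
    ← sectDom_eq_logSector τ (mul_pos (norm_pos_iff.2 (exp_ne_zero _)) ha) hb hδ]
  rfl

theorem flow_zero (τ : ℂ) (p : ℂ × ℂ) : flow τ 0 p = p := by simp [flow]

theorem flow_flow (τ u v : ℂ) (p : ℂ × ℂ) : flow τ u (flow τ v p) = flow τ (u + v) p := by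
  ext <;> simp only [flow]
  · rw [mul_assoc, ← exp_add]
    ring_nf
  · ring

theorem flow_neg_self (hτ : τ ≠ 0) (p : ℂ × ℂ) :
    flow τ (-τ) p = (exp (2 * Real.pi * I * τ) * p.1, p.2 - 1) := by
  simp [flow, neg_div, div_self hτ, sub_eq_add_neg, mul_comm]

theorem mul_snd_flow (hτ : τ ≠ 0) (u : ℂ) (p : ℂ × ℂ) : τ * (flow τ u p).2 = τ * p.2 + u := by
  rw [flow, mul_add, mul_div_cancel₀ _ hτ]

theorem differentiable_flow (τ : ℂ) : Differentiable ℂ fun x : ℂ × ℂ × ℂ => flow τ x.1 x.2 := by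
  unfold flow
  fun_prop

theorem fst_flow_ne_zero {u : ℂ} : (flow τ u p).1 ≠ 0 ↔ p.1 ≠ 0 := by simp [flow, exp_ne_zero]

theorem height_flow (hp : p.1 ≠ 0) (τ u : ℂ) : height (flow τ u p) = height p + u.im := by
  rw [height, flow, norm_mul, logScale_mul (norm_ne_zero_iff.2 hp)
    (norm_ne_zero_iff.2 (exp_ne_zero _)), ← mul_neg, logScale_norm_exp, neg_im, neg_neg, height]

theorem level_flow (hτ : τ ≠ 0) (hp : p.1 ≠ 0) (u : ℂ) : level τ (flow τ u p) = level τ p := by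
  rw [level, mul_snd_flow hτ, height_flow hp, add_im, level, add_sub_add_right_eq_sub]

theorem flow_mem_logSector (hτ : τ ≠ 0) {u : ℂ} :
    flow τ u p ∈ logSector τ α β σ ↔ p ∈ logSector τ (α - u.im) (β - u.im) σ := by
  simp only [logSector, mem_ofPred_eq, fst_flow_ne_zero]
  refine and_congr_right fun hp => ?_
  rw [height_flow hp, level_flow hτ hp, mem_Icc, mem_Icc, sub_le_iff_le_add, le_sub_iff_add_le]

theorem isOpenMap_flow (τ u : ℂ) : IsOpenMap (flow τ u) := by
  refine IsOpenMap.of_inverse (f' := flow τ (-u)) ?_ (fun p => ?_) fun p => ?_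
  · exact (differentiable_flow τ).continuous.comp (by fun_prop : Continuous fun p => (-u, p))
  · rw [flow_flow, add_neg_cancel, flow_zero]
  · rw [flow_flow, neg_add_cancel, flow_zero]

theorem flow_mem_interior_logSector (hτ : τ ≠ 0) {u : ℂ} :
    flow τ u p ∈ interior (logSector τ α β σ) ↔
      p ∈ interior (logSector τ (α - u.im) (β - u.im) σ) := by
  have hpre : flow τ u ⁻¹' logSector τ α β σ = logSector τ (α - u.im) (β - u.im) σ :=
    ext fun _ => flow_mem_logSector hτ
  rw [← mem_preimage, (isOpenMap_flow τ u).preimage_interior_eq_interior_preimage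
    ((differentiable_flow τ).continuous.comp (by fun_prop : Continuous fun p => (u, p))), hpre]

theorem logSector_subset_logSector {α' β' : ℝ} (hα : α' ≤ α) (hβ : β ≤ β') :
    logSector τ α β σ ⊆ logSector τ α' β' σ :=
  fun _ hp => ⟨hp.1, Icc_subset_Icc hα hβ hp.2.1, hp.2.2⟩

theorem continuousAt_height (hp : p.1 ≠ 0) : ContinuousAt height p :=
  ((by fun_prop : ContinuousAt (fun q : ℂ × ℂ => ‖q.1‖) p).log
    (norm_ne_zero_iff.2 hp)).div_const _

theorem continuousAt_level (hp : p.1 ≠ 0) : ContinuousAt (level τ) p :=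
  (continuousAt_height hp).sub (by fun_prop)

theorem mem_interior_logSector (hp : p.1 ≠ 0) (hα : α < height p) (hβ : height p < β)
    (hσ : level τ p < σ) : p ∈ interior (logSector τ α β σ) := by
  have hne : ∀ᶠ q : ℂ × ℂ in 𝓝 p, q.1 ≠ 0 := continuousAt_fst.eventually_ne hp
  refine mem_interior_iff_mem_nhds.2 ?_
  filter_upwards [hne, (continuousAt_height hp).eventually (Icc_mem_nhds hα hβ),
    (continuousAt_level hp).eventually (Iic_mem_nhds hσ)] with q h₁ h₂ h₃
  exact ⟨h₁, h₂, h₃⟩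

theorem logSector_subset_closure_level_lt (hτ : τ ≠ 0) :
    logSector τ α β σ ⊆ closure {p ∈ logSector τ α β σ | level τ p < σ} := by
  intro p hp
  have hpath : Tendsto (fun t : ℝ => (p.1, p.2 + t * I / τ)) (𝓝[>] 0) (𝓝 p) := by
    have hcont : Continuous fun t : ℝ => (p.1, p.2 + t * I / τ) := by fun_prop
    simpa using (hcont.tendsto 0).mono_left nhdsWithin_le_nhds
  refine mem_closure_of_tendsto hpath (eventually_mem_nhdsWithin.mono fun t (ht : 0 < t) => ?_)
  have hlevel : level τ (p.1, p.2 + t * I / τ) = level τ p - t := by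
    rw [level, level, mul_add, mul_div_cancel₀ _ hτ, add_im, im_ofReal_mul, I_im, mul_one,
      ← sub_sub]
    rfl
  have hlt : level τ (p.1, p.2 + t * I / τ) < σ := by linarith [hp.2.2]
  exact ⟨⟨hp.1, hp.2.1, hlt.le⟩, hlt⟩

end

/-! ### The periodic Cauchy kernel -/

section

/-- The `1`-periodic Cauchy kernel, with simple poles of residue `1/2πi` at the integers. -/
noncomputable def kernel (w : ℂ) : ℂ := (exp (2 * Real.pi * I * w) - 1)⁻¹

variable {τ w : ℂ} {y y₁ y₂ : ℝ}

theorem kernel_add_one (w : ℂ) : kernel (w + 1) = kernel w := by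
  rw [kernel, mul_add, mul_one, exp_add, exp_two_pi_mul_I, mul_one, kernel]

theorem exp_two_pi_I_mul_sub_one_ne_zero (hw : ∀ n : ℤ, w ≠ n) :
    exp (2 * Real.pi * I * w) - 1 ≠ 0 := by
  intro h
  obtain ⟨n, hn⟩ := exp_eq_one_iff.1 (sub_eq_zero.1 h)
  exact hw n (mul_left_cancel₀ two_pi_I_ne_zero (hn.trans (mul_comm _ _)))

theorem differentiableAt_kernel (hw : ∀ n : ℤ, w ≠ n) : DifferentiableAt ℂ kernel w :=
  DifferentiableAt.inv (by fun_prop) (exp_two_pi_I_mul_sub_one_ne_zero hw)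

theorem ne_intCast_of_im_mul_ne (hy : ∀ n : ℤ, (τ * w).im ≠ n * τ.im) (n : ℤ) : w ≠ n := by
  rintro rfl
  exact hy n (by simp [mul_comm])

theorem tendsto_mul_kernel : Tendsto (fun w => w * kernel w) (𝓝[≠] 0) (𝓝 (2 * Real.pi * I)⁻¹) := by
  have hderiv : HasDerivAt (fun w => exp (2 * Real.pi * I * w)) (2 * Real.pi * I) 0 := by
    simpa using ((hasDerivAt_id (0 : ℂ)).const_mul (2 * Real.pi * I)).cexp
  refine ((hasDerivAt_iff_tendsto_slope.1 hderiv).inv₀ two_pi_I_ne_zero).congr fun w => ?_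
  simp [slope_def_field, kernel, div_eq_mul_inv]

theorem norm_kernel_mul_max_le_two (hw : 1 ≤ |w.im|) : ‖kernel w‖ * max 1 (-w.im) ≤ 2 := by
  have hnorm : ‖exp (2 * Real.pi * I * w)‖ = Real.exp (2 * Real.pi * -w.im) := by
    simp [norm_exp]
  have hpi := Real.pi_gt_three
  rw [kernel, norm_inv]
  rcases le_abs'.1 hw with hw | hw
  · rw [max_eq_right (by linarith)]
    have hlower : -w.im ≤ ‖exp (2 * Real.pi * I * w) - 1‖ := by
      have htri := norm_sub_norm_le (exp (2 * Real.pi * I * w)) 1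
      rw [hnorm, norm_one] at htri
      nlinarith [Real.add_one_le_exp (2 * Real.pi * -w.im)]
    rw [inv_mul_le_iff₀ (by linarith)]
    linarith
  · rw [max_eq_left (by linarith), mul_one]
    have hupper : ‖exp (2 * Real.pi * I * w)‖ ≤ 2⁻¹ := by
      rw [hnorm, mul_neg, Real.exp_neg]
      exact inv_anti₀ two_pos (by nlinarith [Real.add_one_le_exp (2 * Real.pi * w.im)])
    refine inv_le_of_inv_le₀ two_pos ?_
    have htri := norm_sub_norm_le 1 (exp (2 * Real.pi * I * w))
    rw [norm_sub_rev, norm_one] at htri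
    linarith

/-- Only a compact part of the line `Im (τw) = y` is not covered by `norm_kernel_mul_max_le_two`. -/
theorem exists_norm_kernel_mul_max_le (hτ : 0 < τ.im) (hy : ∀ n : ℤ, y ≠ n * τ.im) :
    ∃ κ, ∀ w, (τ * w).im = y → ‖kernel w‖ * max 1 (-w.im) ≤ κ := by
  let W (s : ℝ) : ℂ := ⟨(y - s * τ.re) / τ.im, s⟩
  have hWim (s : ℝ) : (τ * W s).im = y := by
    simp only [W, mul_im]
    field_simp
    ring
  have hW (w : ℂ) (hw : (τ * w).im = y) : w = W w.im := by
    rw [mul_im] at hw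
    refine Complex.ext ?_ rfl
    rw [eq_div_iff hτ.ne']
    linarith
  have hWc : Continuous W := by
    simp only [W, mk_eq_add_mul_I]
    fun_prop
  have hcont : Continuous fun s => ‖kernel (W s)‖ * max 1 (-s) :=
    continuous_iff_continuousAt.2 fun s => ((differentiableAt_kernel (ne_intCast_of_im_mul_ne
      (by rwa [hWim]))).continuousAt.comp hWc.continuousAt).norm.mul (by fun_prop)
  obtain ⟨κ, hκ⟩ :=
    (isCompact_Icc (a := -1) (b := 1)).exists_bound_of_continuousOn hcont.continuousOn
  refine ⟨max κ 2, fun w hw => ?_⟩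
  rcases le_total 1 |w.im| with him | him
  · exact (norm_kernel_mul_max_le_two him).trans (le_max_right _ _)
  · rw [hW w hw]
    exact ((le_abs_self _).trans (hκ w.im (abs_le.1 him))).trans (le_max_left _ _)

theorem eventually_one_le_abs_im_div_stripEnds (hτ : 0 < τ.im) :
    ∀ᶠ u in stripEnds y₁ y₂, 1 ≤ |(u / τ).im| := by
  have hfar := (tendsto_norm_cocompact_atTop.comp
    (tendsto_re_stripEnds (y₁ := y₁) (y₂ := y₂))).eventually_ge_atTop
      ((normSq τ + max |y₁| |y₂| * |τ.re|) / τ.im)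
  filter_upwards [hfar, mem_inf_of_right (mem_principal_self _)] with u hre him
  have hn : 0 < normSq τ := normSq_pos.2 (ne_zero_of_im_pos hτ)
  have heq : (u / τ).im * normSq τ = u.im * τ.re - u.re * τ.im := by
    rw [div_im]
    field_simp
  have hre' : normSq τ + max |y₁| |y₂| * |τ.re| ≤ |u.re * τ.im| := by
    rwa [abs_mul, abs_of_pos hτ, ← div_le_iff₀ hτ]
  have htri := abs_sub_abs_le_abs_sub (u.re * τ.im) (u.im * τ.re)
  have himre : |u.im * τ.re| ≤ max |y₁| |y₂| * |τ.re| := by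
    rw [abs_mul]
    gcongr
    exact abs_le_max_abs_abs him.1 him.2
  rw [abs_sub_comm, ← heq, abs_mul (u / τ).im, abs_of_pos hn] at htri
  exact le_of_mul_le_mul_right (by linarith) hn

end

/-! ### Line integrals along the leaves -/

section

/-- Holomorphy on a closed sector with inverse square decay in real flow time, which makes the line
integrals along the leaves converge. -/
structure HolomorphicDecay (τ : ℂ) (α β σ B : ℝ) (Δ : ℂ × ℂ → ℂ) : Prop where
  continuousOn : ContinuousOn Δ (logSector τ α β σ)
  differentiableOn : DifferentiableOn ℂ Δ (interior (logSector τ α β σ))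
  norm_le : ∀ p ∈ logSector τ α β σ, ‖Δ p‖ ≤ B * (1 + (τ * p.2).re ^ 2)⁻¹

/-- The restriction of `Δ` to the leaf of the flow through `p`, multiplied by the Cauchy kernel. -/
noncomputable def leafIntegrand (τ : ℂ) (Δ : ℂ × ℂ → ℂ) (p : ℂ × ℂ) (u : ℂ) : ℂ :=
  Δ (flow τ u p) * kernel (u / τ)

/-- The Cauchy-type transform of `Δ` along the line `Im u = y` in the leaf through `p`. -/
noncomputable def lineTransform (τ : ℂ) (Δ : ℂ × ℂ → ℂ) (y : ℝ) (p : ℂ × ℂ) : ℂ :=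
  τ⁻¹ * ∫ x : ℝ, leafIntegrand τ Δ p (x + y * I)

variable {τ : ℂ} {α β σ B κ y : ℝ} {Δ : ℂ × ℂ → ℂ} {p : ℂ × ℂ}

theorem leafIntegrand_flow_self (hτ : τ ≠ 0) (u : ℂ) (p : ℂ × ℂ) :
    leafIntegrand τ Δ (flow τ τ p) u = leafIntegrand τ Δ p (u + τ) := by
  rw [leafIntegrand, flow_flow, leafIntegrand, add_div, div_self hτ, kernel_add_one]

theorem lineTransform_flow_self (hτ : τ ≠ 0) (y : ℝ) (p : ℂ × ℂ) :
    lineTransform τ Δ y (flow τ τ p) = lineTransform τ Δ (y + τ.im) p := by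
  have hline (x : ℝ) : (x : ℂ) + y * I + τ = (x + τ.re : ℝ) + (y + τ.im : ℝ) * I := by
    apply Complex.ext <;> simp
  simp only [lineTransform, leafIntegrand_flow_self hτ, hline]
  rw [integral_add_right_eq_self (fun x : ℝ => leafIntegrand τ Δ p (x + (y + τ.im : ℝ) * I))]

theorem lineTransform_flow_neg_self (hτ : τ ≠ 0) (y : ℝ) (p : ℂ × ℂ) :
    lineTransform τ Δ (y + τ.im) (flow τ (-τ) p) = lineTransform τ Δ y p := by
  rw [← lineTransform_flow_self hτ, flow_flow, add_neg_cancel, flow_zero]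

theorem norm_leafIntegrand_le (hτ : τ ≠ 0) (hΔ : HolomorphicDecay τ α β σ B Δ) {u : ℂ}
    (hp : p ∈ logSector τ (α - u.im) (β - u.im) σ) (hκ : ‖kernel (u / τ)‖ ≤ κ) :
    ‖leafIntegrand τ Δ p u‖ ≤ B * κ * (1 + ((τ * p.2).re + u.re) ^ 2)⁻¹ := by
  have hdecay := hΔ.norm_le _ ((flow_mem_logSector hτ).2 hp)
  rw [mul_snd_flow hτ, add_re] at hdecay
  calc ‖leafIntegrand τ Δ p u‖ = ‖Δ (flow τ u p)‖ * ‖kernel (u / τ)‖ := norm_mul _ _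
    _ ≤ B * (1 + ((τ * p.2).re + u.re) ^ 2)⁻¹ * κ :=
      mul_le_mul hdecay hκ (norm_nonneg _) ((norm_nonneg _).trans hdecay)
    _ = B * κ * (1 + ((τ * p.2).re + u.re) ^ 2)⁻¹ := by ring

theorem exists_norm_kernel_line_le (hτ : 0 < τ.im) (hy : ∀ n : ℤ, y ≠ n * τ.im) :
    ∃ κ, ∀ x : ℝ, ‖kernel ((x + y * I) / τ)‖ ≤ κ := by
  obtain ⟨κ, hκ⟩ := exists_norm_kernel_mul_max_le hτ hy
  refine ⟨κ, fun x => (le_mul_of_one_le_right (norm_nonneg _) (le_max_left _ _)).trans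
    (hκ _ ?_)⟩
  simp [mul_div_cancel₀ _ (ne_zero_of_im_pos hτ)]

theorem differentiableAt_kernel_div (hτ : 0 < τ.im) {u : ℂ} (hu : ∀ n : ℤ, u ≠ n * τ) :
    DifferentiableAt ℂ (fun u => kernel (u / τ)) u :=
  DifferentiableAt.comp (g := kernel) u
    (differentiableAt_kernel fun n h => hu n ((div_eq_iff (ne_zero_of_im_pos hτ)).1 h))
    (by fun_prop)

theorem line_ne_intCast_mul (hy : ∀ n : ℤ, y ≠ n * τ.im) (x : ℝ) (n : ℤ) :
    (x : ℂ) + y * I ≠ n * τ := fun h => hy n (by simpa using congrArg im h)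

theorem continuous_leafIntegrand_line (hτ : 0 < τ.im) (hΔ : ContinuousOn Δ (logSector τ α β σ))
    (hy : ∀ n : ℤ, y ≠ n * τ.im) (hp : p ∈ logSector τ (α - y) (β - y) σ) :
    Continuous fun x : ℝ => leafIntegrand τ Δ p (x + y * I) := by
  refine Continuous.mul (hΔ.comp_continuous ?_ fun x => ?_) ?_
  · exact (differentiable_flow τ).continuous.comp
      (by fun_prop : Continuous fun x : ℝ => ((x + y * I : ℂ), p))
  · exact (flow_mem_logSector (ne_zero_of_im_pos hτ)).2 (by simpa using hp)
  · refine continuous_iff_continuousAt.2 fun x => ?_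
    exact ((differentiableAt_kernel_div hτ (line_ne_intCast_mul hy x)).continuousAt).comp
      (f := fun x : ℝ => (x : ℂ) + y * I) (by fun_prop)

theorem integrable_inv_one_add_sq_add (X : ℝ) : Integrable fun x : ℝ => (1 + (X + x) ^ 2)⁻¹ :=
  integrable_inv_one_add_sq.comp_add_left X

theorem integrable_leafIntegrand_line (hτ : 0 < τ.im) (hΔ : HolomorphicDecay τ α β σ B Δ)
    (hy : ∀ n : ℤ, y ≠ n * τ.im) (hp : p ∈ logSector τ (α - y) (β - y) σ) :
    Integrable fun x : ℝ => leafIntegrand τ Δ p (x + y * I) := by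
  obtain ⟨κ, hκ⟩ := exists_norm_kernel_line_le hτ hy
  refine ((integrable_inv_one_add_sq_add (τ * p.2).re).const_mul (B * κ)).mono'
    (continuous_leafIntegrand_line hτ hΔ.continuousOn hy hp).aestronglyMeasurable
    (Eventually.of_forall fun x => ?_)
  simpa using norm_leafIntegrand_le (ne_zero_of_im_pos hτ) hΔ (by simpa using hp) (hκ x)

theorem inv_one_add_sq_add_le_three_mul {X X₀ : ℝ} (h : |X - X₀| ≤ 1) (x : ℝ) :
    (1 + (X + x) ^ 2)⁻¹ ≤ 3 * (1 + (X₀ + x) ^ 2)⁻¹ := by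
  rw [inv_eq_one_div, inv_eq_one_div, mul_one_div, div_le_div_iff₀ (by positivity) (by positivity)]
  nlinarith [sq_nonneg (X + x + (X - X₀)), abs_le.1 h, sq_abs (X - X₀), abs_nonneg (X - X₀)]

theorem exists_integrable_bound_leafIntegrand (hτ : 0 < τ.im) (hΔ : HolomorphicDecay τ α β σ B Δ)
    (hy : ∀ n : ℤ, y ≠ n * τ.im) (p : ℂ × ℂ) :
    ∃ bound : ℝ → ℝ, Integrable bound ∧ ∀ᶠ q in 𝓝 p, q ∈ logSector τ (α - y) (β - y) σ →
      ∀ x : ℝ, ‖leafIntegrand τ Δ q (x + y * I)‖ ≤ bound x := by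
  obtain ⟨κ, hκ⟩ := exists_norm_kernel_line_le hτ hy
  refine ⟨fun x => B * κ * (3 * (1 + ((τ * p.2).re + x) ^ 2)⁻¹),
    ((integrable_inv_one_add_sq_add _).const_mul 3).const_mul _, ?_⟩
  have hnear : ∀ᶠ q : ℂ × ℂ in 𝓝 p, dist (τ * q.2).re (τ * p.2).re < 1 :=
    (by fun_prop : Continuous fun q : ℂ × ℂ => (τ * q.2).re).continuousAt.eventually
      (Metric.ball_mem_nhds _ one_pos)
  filter_upwards [hnear] with q hqp hq x
  have hle := norm_leafIntegrand_le (u := x + y * I) (ne_zero_of_im_pos hτ) hΔ (by simpa using hq)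
    (hκ x)
  have hBκ : 0 ≤ B * κ :=
    nonneg_of_mul_nonneg_left ((norm_nonneg _).trans hle) (by positivity)
  refine hle.trans (mul_le_mul_of_nonneg_left ?_ hBκ)
  simpa using inv_one_add_sq_add_le_three_mul (Real.dist_eq _ _ ▸ hqp.le) x

theorem continuousOn_lineTransform (hτ : 0 < τ.im) (hΔ : HolomorphicDecay τ α β σ B Δ)
    (hy : ∀ n : ℤ, y ≠ n * τ.im) :
    ContinuousOn (lineTransform τ Δ y) (logSector τ (α - y) (β - y) σ) := by
  intro p hp
  obtain ⟨bound, hint, hbound⟩ := exists_integrable_bound_leafIntegrand hτ hΔ hy p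
  refine continuousWithinAt_const.mul (continuousWithinAt_of_dominated (bound := bound)
    (F := fun q (x : ℝ) => leafIntegrand τ Δ q (x + y * I)) ?_ ?_ hint ?_)
  · exact eventually_mem_nhdsWithin.mono fun q hq =>
      (continuous_leafIntegrand_line hτ hΔ.continuousOn hy hq).aestronglyMeasurable
  · filter_upwards [eventually_mem_nhdsWithin, hbound.filter_mono nhdsWithin_le_nhds] with q hq hb
    exact Eventually.of_forall (hb hq)
  · refine Eventually.of_forall fun x => ContinuousWithinAt.mul ?_ continuousWithinAt_const
    refine (hΔ.continuousOn.comp (s := logSector τ (α - y) (β - y) σ)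
      (f := flow τ (x + y * I)) ?_ fun q hq => ?_) p hp
    · exact ((differentiable_flow τ).continuous.comp
        (by fun_prop : Continuous fun q => ((x : ℂ) + y * I, q))).continuousOn
    · exact (flow_mem_logSector (ne_zero_of_im_pos hτ)).2 (by simpa using hq)

theorem differentiableOn_lineTransform (hτ : 0 < τ.im) (hΔ : HolomorphicDecay τ α β σ B Δ)
    (hy : ∀ n : ℤ, y ≠ n * τ.im) :
    DifferentiableOn ℂ (lineTransform τ Δ y) (interior (logSector τ (α - y) (β - y) σ)) := by
  intro p hp
  obtain ⟨bound, hint, hbound⟩ := exists_integrable_bound_leafIntegrand hτ hΔ hy p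
  obtain ⟨R, hR, hball⟩ := Metric.eventually_nhds_iff_ball.1
    (hbound.and (isOpen_interior.mem_nhds hp))
  have hsub {q : ℂ × ℂ} (hq : q ∈ Metric.ball p R) := interior_subset (hball q hq).2
  refine ((differentiableAt_integral_of_dominated hR
    (fun q hq => (continuous_leafIntegrand_line hτ hΔ.continuousOn hy
      (hsub hq)).aestronglyMeasurable) (Eventually.of_forall fun x => ?_)
    (Eventually.of_forall fun x q hq => (hball q hq).1 (hsub hq) x) hint).const_mul
      τ⁻¹).differentiableWithinAt
  refine (hΔ.differentiableOn.comp (f := flow τ (x + y * I)) ?_ fun q hq => ?_).mul_const _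
  · exact ((differentiable_flow τ).comp
      (by fun_prop : Differentiable ℂ fun q => ((x : ℂ) + y * I, q))).differentiableOn
  · exact (flow_mem_interior_logSector (ne_zero_of_im_pos hτ)).2 (by simpa using
      (show q ∈ interior (logSector τ (α - y) (β - y) σ) from (hball q hq).2))

end

section

variable {τ : ℂ} {α β σ B y y₁ y₂ : ℝ} {Δ : ℂ × ℂ → ℂ} {p : ℂ × ℂ}

theorem ne_intCast_mul_of_mem_Ioo {t : ℝ} (k : ℤ) (hy : y ∈ Ioo (k * t) ((k + 1) * t)) (n : ℤ) :
    y ≠ n * t := by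
  rintro rfl
  have ht : 0 < t := by linarith [hy.1.trans hy.2]
  have hkn : k < n := by exact_mod_cast lt_of_mul_lt_mul_right hy.1 ht.le
  have hnk : n < k + 1 := by exact_mod_cast lt_of_mul_lt_mul_right hy.2 ht.le
  omega

theorem ne_intCast_mul_of_im_mem_Ioo (hτ : 0 < τ.im) {u : ℂ} (hu : u.im ∈ Ioo (-τ.im) τ.im)
    (hu₀ : u ≠ 0) (n : ℤ) : u ≠ n * τ := by
  rintro rfl
  have him : ((n : ℂ) * τ).im = n * τ.im := by simp
  rw [him, mem_Ioo, ← neg_one_mul, mul_lt_mul_iff_left₀ hτ, mul_lt_iff_lt_one_left hτ] at hu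
  obtain ⟨h₁, h₂⟩ : -1 < n ∧ n < 1 := by exact_mod_cast hu
  obtain rfl : n = 0 := by omega
  simp at hu₀

theorem tendsto_mul_leafIntegrand (hτ : 0 < τ.im) (hΔ : ContinuousAt Δ p) :
    Tendsto (fun u => u * leafIntegrand τ Δ p u) (𝓝[≠] 0)
      (𝓝 (τ * Δ p * (2 * Real.pi * I)⁻¹)) := by
  have hτ₀ := ne_zero_of_im_pos hτ
  have hflow : Continuous fun u => flow τ u p :=
    (differentiable_flow τ).continuous.comp (by fun_prop : Continuous fun u : ℂ => (u, p))
  have hΔu : Tendsto (fun u => Δ (flow τ u p)) (𝓝[≠] 0) (𝓝 (Δ p)) := by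
    rw [← flow_zero τ p] at hΔ
    simpa [flow_zero, Function.comp_def] using (hΔ.comp (f := fun u => flow τ u p)
      hflow.continuousAt).tendsto.mono_left nhdsWithin_le_nhds
  have hdiv : Tendsto (fun u => u / τ) (𝓝[≠] 0) (𝓝[≠] 0) := by
    refine tendsto_nhdsWithin_iff.2 ⟨?_, ?_⟩
    · have hcont : Continuous fun u => u / τ := by fun_prop
      simpa using (hcont.tendsto 0).mono_left nhdsWithin_le_nhds
    · filter_upwards [self_mem_nhdsWithin] with u hu using div_ne_zero hu hτ₀
  rw [mul_assoc]
  refine ((hΔu.mul (tendsto_mul_kernel.comp hdiv)).const_mul τ).congr fun u => ?_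
  rw [Function.comp_apply, leafIntegrand]
  field_simp

theorem tendsto_leafIntegrand_stripEnds (hτ : 0 < τ.im) (hΔ : HolomorphicDecay τ α β σ B Δ)
    (hp : p ∈ logSector τ (α - y₁) (β - y₂) σ) :
    Tendsto (leafIntegrand τ Δ p) (stripEnds y₁ y₂) (𝓝 0) := by
  have hdecay : Tendsto (fun x : ℝ => B * 2 * (1 + ((τ * p.2).re + x) ^ 2)⁻¹) (cocompact ℝ)
      (𝓝 0) := by
    have hshift := (Homeomorph.addLeft (τ * p.2).re).isClosedEmbedding.tendsto_cocompact
    have hsq : Tendsto (fun x : ℝ => 1 + ‖x‖ ^ 2) (cocompact ℝ) atTop :=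
      tendsto_atTop_add_const_left _ _
        ((tendsto_pow_atTop two_ne_zero).comp tendsto_norm_cocompact_atTop)
    simpa using ((tendsto_inv_atTop_zero.comp hsq).comp hshift).const_mul (B * 2)
  refine squeeze_zero_norm' ?_ (hdecay.comp tendsto_re_stripEnds)
  filter_upwards [eventually_one_le_abs_im_div_stripEnds hτ,
    mem_inf_of_right (mem_principal_self _)] with u hfar hu
  refine norm_leafIntegrand_le (ne_zero_of_im_pos hτ) hΔ
    ⟨hp.1, Icc_subset_Icc ?_ ?_ hp.2.1, hp.2.2⟩
    ((le_mul_of_one_le_right (norm_nonneg _) (le_max_left _ _)).trans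
      (norm_kernel_mul_max_le_two hfar))
  · linarith [hu.1]
  · linarith [hu.2]

theorem continuousOn_leafIntegrand (hτ : 0 < τ.im) (hΔ : ContinuousOn Δ (logSector τ α β σ))
    (hy₁ : -τ.im < y₁) (hy₂ : y₂ < τ.im) (hp : p ∈ logSector τ (α - y₁) (β - y₂) σ) :
    ContinuousOn (leafIntegrand τ Δ p) (im ⁻¹' Icc y₁ y₂ \ {0}) := by
  refine ContinuousOn.mul (hΔ.comp ?_ fun u hu => ?_) fun u hu => ?_
  · exact ((differentiable_flow τ).continuous.comp
      (by fun_prop : Continuous fun u : ℂ => (u, p))).continuousOn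
  · exact (flow_mem_logSector (ne_zero_of_im_pos hτ)).2
      (logSector_subset_logSector (by linarith [hu.1.1]) (by linarith [hu.1.2]) hp)
  · exact (differentiableAt_kernel_div hτ (ne_intCast_mul_of_im_mem_Ioo hτ
      (Icc_subset_Ioo hy₁ hy₂ hu.1) hu.2)).continuousAt.continuousWithinAt

theorem differentiableOn_leafIntegrand (hτ : 0 < τ.im)
    (hΔ : DifferentiableOn ℂ Δ (interior (logSector τ α β σ)))
    (hy₁ : -τ.im < y₁) (hy₂ : y₂ < τ.im) (hp : p ∈ logSector τ (α - y₁) (β - y₂) σ)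
    (hσ : level τ p < σ) :
    DifferentiableOn ℂ (leafIntegrand τ Δ p) (im ⁻¹' Ioo y₁ y₂ \ {0}) := by
  refine DifferentiableOn.mul (hΔ.comp ?_ fun u hu => ?_) fun u hu => ?_
  · exact ((differentiable_flow τ).comp
      (by fun_prop : Differentiable ℂ fun u : ℂ => (u, p))).differentiableOn
  · exact (flow_mem_interior_logSector (ne_zero_of_im_pos hτ)).2 (mem_interior_logSector hp.1
      (by linarith [hp.2.1.1, hu.1.1]) (by linarith [hp.2.1.2, hu.1.2]) hσ)
  · exact (differentiableAt_kernel_div hτ (ne_intCast_mul_of_im_mem_Ioo hτ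
      (Ioo_subset_Ioo hy₁.le hy₂.le hu.1) hu.2)).differentiableWithinAt

theorem lineTransform_sub_lineTransform_of_level_lt (hτ : 0 < τ.im)
    (hΔ : HolomorphicDecay τ α β σ B Δ) (hy₁ : y₁ ∈ Ioo (-τ.im) 0) (hy₂ : y₂ ∈ Ioo 0 τ.im)
    (hp : p ∈ logSector τ (α - y₁) (β - y₂) σ) (hσ : level τ p < σ) :
    lineTransform τ Δ y₁ p - lineTransform τ Δ y₂ p = Δ p := by
  have hlt : y₁ < y₂ := hy₁.2.trans hy₂.1
  have hΔp : ContinuousAt Δ p := hΔ.continuousOn.continuousAt <| mem_interior_iff_mem_nhds.1 <|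
    mem_interior_logSector hp.1 (by linarith [hp.2.1.1, hy₁.2]) (by linarith [hp.2.1.2, hy₂.1]) hσ
  have hres := integral_sub_integral_eq_residue_of_strip hy₁.2 hy₂.1
    (continuousOn_leafIntegrand hτ hΔ.continuousOn hy₁.1 hy₂.2 hp)
    (differentiableOn_leafIntegrand hτ hΔ.differentiableOn hy₁.1 hy₂.2 hp hσ)
    (tendsto_mul_leafIntegrand hτ hΔp) (tendsto_leafIntegrand_stripEnds hτ hΔ hp)
    (integrable_leafIntegrand_line hτ hΔ (ne_intCast_mul_of_mem_Ioo (-1) (by simpa using hy₁))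
      (logSector_subset_logSector le_rfl (by linarith) hp))
    (integrable_leafIntegrand_line hτ hΔ (ne_intCast_mul_of_mem_Ioo 0 (by simpa using hy₂))
      (logSector_subset_logSector (by linarith) le_rfl hp))
  rw [lineTransform, lineTransform, ← mul_sub, hres]
  have := ne_zero_of_im_pos hτ
  field_simp [two_pi_I_ne_zero]

theorem lineTransform_sub_lineTransform (hτ : 0 < τ.im) (hΔ : HolomorphicDecay τ α β σ B Δ)
    (hy₁ : y₁ ∈ Ioo (-τ.im) 0) (hy₂ : y₂ ∈ Ioo 0 τ.im)
    (hp : p ∈ logSector τ (α - y₁) (β - y₂) σ) :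
    lineTransform τ Δ y₁ p - lineTransform τ Δ y₂ p = Δ p := by
  have hlt : y₁ < y₂ := hy₁.2.trans hy₂.1
  have hc₁ := (continuousOn_lineTransform hτ hΔ (ne_intCast_mul_of_mem_Ioo (-1)
    (by simpa using hy₁))).mono (logSector_subset_logSector (σ := σ) le_rfl
      (by linarith : β - y₂ ≤ β - y₁))
  have hc₂ := (continuousOn_lineTransform hτ hΔ (ne_intCast_mul_of_mem_Ioo 0
    (by simpa using hy₂))).mono (logSector_subset_logSector (σ := σ)
      (by linarith : α - y₂ ≤ α - y₁) le_rfl)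
  exact EqOn.of_subset_closure
    (fun q hq => lineTransform_sub_lineTransform_of_level_lt hτ hΔ hy₁ hy₂ hq.1 hq.2)
    (hc₁.sub hc₂) (hΔ.continuousOn.mono (logSector_subset_logSector (by linarith [hy₁.2])
      (by linarith [hy₂.1]))) (sep_subset _ _)
    (logSector_subset_closure_level_lt (ne_zero_of_im_pos hτ)) hp

end

/-! ### Gluing the line transforms -/

section

variable {τ : ℂ} {α β γ γ' σ B y : ℝ} {Δ f : ℂ × ℂ → ℂ} {p : ℂ × ℂ}

theorem logSector_mem_of_height_lt {l : Filter (ℂ × ℂ)} (hl : l ≤ 𝓝 p) (hp : p.1 ≠ 0)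
    (hγ : height p < γ) (h : logSector τ α β σ ∈ l) : logSector τ α γ σ ∈ l := by
  filter_upwards [h, hl ((continuousAt_height hp).eventually (Iic_mem_nhds hγ))] with q hq hqγ
  exact ⟨hq.1, ⟨hq.2.1.1, hqγ⟩, hq.2.2⟩

theorem logSector_mem_of_lt_height {l : Filter (ℂ × ℂ)} (hl : l ≤ 𝓝 p) (hp : p.1 ≠ 0)
    (hγ : γ < height p) (h : logSector τ α β σ ∈ l) : logSector τ γ β σ ∈ l := by
  filter_upwards [h, hl ((continuousAt_height hp).eventually (Ici_mem_nhds hγ))] with q hq hqγ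
  exact ⟨hq.1, ⟨hqγ, hq.2.1.2⟩, hq.2.2⟩

theorem continuousOn_logSector_of_overlap (hγ : γ < γ')
    (hlow : ContinuousOn f (logSector τ α γ' σ)) (hhigh : ContinuousOn f (logSector τ γ β σ)) :
    ContinuousOn f (logSector τ α β σ) := by
  intro p hp
  rcases lt_or_ge (height p) γ' with h | h
  · exact (hlow p ⟨hp.1, ⟨hp.2.1.1, h.le⟩, hp.2.2⟩).mono_of_mem_nhdsWithin
      (logSector_mem_of_height_lt nhdsWithin_le_nhds hp.1 h self_mem_nhdsWithin)
  · have h' := hγ.trans_le h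
    exact (hhigh p ⟨hp.1, ⟨h'.le, hp.2.1.2⟩, hp.2.2⟩).mono_of_mem_nhdsWithin
      (logSector_mem_of_lt_height nhdsWithin_le_nhds hp.1 h' self_mem_nhdsWithin)

theorem differentiableOn_interior_logSector_of_overlap (hγ : γ < γ')
    (hlow : DifferentiableOn ℂ f (interior (logSector τ α γ' σ)))
    (hhigh : DifferentiableOn ℂ f (interior (logSector τ γ β σ))) :
    DifferentiableOn ℂ f (interior (logSector τ α β σ)) := by
  intro p hp
  have hp₀ : p.1 ≠ 0 := (interior_subset hp).1
  rw [mem_interior_iff_mem_nhds] at hp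
  refine DifferentiableAt.differentiableWithinAt ?_
  rcases lt_or_ge (height p) γ' with h | h
  · exact hlow.differentiableAt
      (interior_mem_nhds.2 (logSector_mem_of_height_lt le_rfl hp₀ h hp))
  · exact hhigh.differentiableAt
      (interior_mem_nhds.2 (logSector_mem_of_lt_height le_rfl hp₀ (hγ.trans_le h) hp))

/-- Parameters for gluing two line transforms into a solution on the enlarged sector: the lines are
`Im u = -ε` and `Im u = τ.im + ε`, and the two formulas are exchanged at height `ρ`. -/
structure Gluing (τ : ℂ) (α β : ℝ) where
  ε : ℝ
  ρ : ℝ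
  ε_pos : 0 < ε
  ε_lt : ε < τ.im
  lt_ρ : α + ε < ρ
  ρ_lt : ρ + τ.im + ε < β

/-- The transform along a line just below the pole `0`, corrected by the residue there; it solves
the difference equation in the upper part of the sector. -/
noncomputable def upperBranch (τ : ℂ) (Δ : ℂ × ℂ → ℂ) (ε : ℝ) (p : ℂ × ℂ) : ℂ :=
  lineTransform τ Δ (-ε) p - Δ p

/-- The transform along a line just above the pole `τ`, corrected by the residue there; it solves
the difference equation in the lower part of the sector. -/
noncomputable def lowerBranch (τ : ℂ) (Δ : ℂ × ℂ → ℂ) (ε : ℝ) (p : ℂ × ℂ) : ℂ :=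
  lineTransform τ Δ (τ.im + ε) p + Δ (flow τ τ p)

theorem lowerBranch_flow_neg (hτ : τ ≠ 0) (ε : ℝ) (p : ℂ × ℂ) :
    lowerBranch τ Δ ε (flow τ (-τ) p) = lineTransform τ Δ ε p + Δ p := by
  rw [lowerBranch, add_comm τ.im, lineTransform_flow_neg_self hτ, flow_flow, add_neg_cancel,
    flow_zero]

namespace Gluing

/-- The solution of the difference equation on the enlarged sector, glued from the two branches. -/
noncomputable def solution (g : Gluing τ α β) (Δ : ℂ × ℂ → ℂ) (p : ℂ × ℂ) : ℂ :=
  if g.ρ ≤ height p then upperBranch τ Δ g.ε p else lowerBranch τ Δ g.ε p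

theorem nonempty (hτ : 0 < τ.im) (h : α + τ.im < β) : Nonempty (Gluing τ α β) := by
  let ε := min (τ.im / 2) ((β - (α + τ.im)) / 4)
  have hε : 0 < ε := lt_min (half_pos hτ) (by linarith)
  have hετ : ε ≤ τ.im / 2 := min_le_left _ _
  have hεβ : ε ≤ (β - (α + τ.im)) / 4 := min_le_right _ _
  exact ⟨⟨ε, α + 2 * ε, hε, by linarith, by linarith, by linarith⟩⟩

variable (g : Gluing τ α β)

theorem neg_ε_mem : -g.ε ∈ Ioo (-τ.im) 0 :=
  ⟨neg_lt_neg g.ε_lt, neg_lt_zero.2 g.ε_pos⟩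

theorem neg_ε_ne_intCast_mul (n : ℤ) : -g.ε ≠ n * τ.im :=
  ne_intCast_mul_of_mem_Ioo (-1) (by simpa using g.neg_ε_mem) n

theorem add_ε_ne_intCast_mul (n : ℤ) : τ.im + g.ε ≠ n * τ.im :=
  ne_intCast_mul_of_mem_Ioo 1 ⟨by push_cast; linarith [g.ε_pos], by push_cast; linarith [g.ε_lt]⟩ n

theorem exists_norm_kernel_mul_max_le (hτ : 0 < τ.im) :
    ∃ κ, 0 ≤ κ ∧
      ∀ w, (τ * w).im = -g.ε ∨ (τ * w).im = τ.im + g.ε → ‖kernel w‖ * max 1 (-w.im) ≤ κ := by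
  obtain ⟨κ₁, h₁⟩ := Sectorial.exists_norm_kernel_mul_max_le hτ g.neg_ε_ne_intCast_mul
  obtain ⟨κ₂, h₂⟩ := Sectorial.exists_norm_kernel_mul_max_le hτ g.add_ε_ne_intCast_mul
  refine ⟨max 0 (max κ₁ κ₂), le_max_left _ _, fun w hw => le_max_of_le_right ?_⟩
  exact hw.elim (fun hw => le_max_of_le_left (h₁ w hw)) fun hw => le_max_of_le_right (h₂ w hw)

theorem upperBranch_eq_lineTransform (hτ : 0 < τ.im) (hΔ : HolomorphicDecay τ α β σ B Δ)
    (hy : y ∈ Ioo 0 τ.im) (hp : p ∈ logSector τ (α + g.ε) (β - y) σ) :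
    upperBranch τ Δ g.ε p = lineTransform τ Δ y p := by
  have hjump := lineTransform_sub_lineTransform hτ hΔ g.neg_ε_mem hy (by rwa [sub_neg_eq_add])
  rw [upperBranch, ← hjump, sub_sub_cancel]

theorem lowerBranch_eq_lineTransform (hτ : 0 < τ.im) (hΔ : HolomorphicDecay τ α β σ B Δ)
    (hy : y ∈ Ioo 0 τ.im) (hp : p ∈ logSector τ (α - y) (β - τ.im - g.ε) σ) :
    lowerBranch τ Δ g.ε p = lineTransform τ Δ y p := by
  have hτ₀ := ne_zero_of_im_pos hτ
  have hflow : flow τ τ p ∈ logSector τ (α - (y - τ.im)) (β - g.ε) σ := by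
    rwa [flow_mem_logSector hτ₀, sub_sub _ _ τ.im, sub_add_cancel, sub_right_comm]
  have hjump := lineTransform_sub_lineTransform hτ hΔ (y₁ := y - τ.im)
    ⟨by linarith [hy.1], by linarith [hy.2]⟩ ⟨g.ε_pos, g.ε_lt⟩ hflow
  rw [lineTransform_flow_self hτ₀, lineTransform_flow_self hτ₀, sub_add_cancel] at hjump
  rw [lowerBranch, ← hjump, add_comm τ.im, add_sub_cancel]

theorem upperBranch_eq_lowerBranch (hτ : 0 < τ.im) (hΔ : HolomorphicDecay τ α β σ B Δ)
    (hp : p ∈ logSector τ (α + g.ε) (β - τ.im - g.ε) σ) :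
    upperBranch τ Δ g.ε p = lowerBranch τ Δ g.ε p := by
  have hε := g.ε_pos
  have hy : τ.im / 2 ∈ Ioo 0 τ.im := ⟨half_pos hτ, half_lt_self hτ⟩
  rw [g.upperBranch_eq_lineTransform hτ hΔ hy, g.lowerBranch_eq_lineTransform hτ hΔ hy]
  · exact logSector_subset_logSector (by linarith) le_rfl hp
  · exact logSector_subset_logSector le_rfl (by linarith) hp

theorem solution_eq_upperBranch (hτ : 0 < τ.im) (hΔ : HolomorphicDecay τ α β σ B Δ) :
    EqOn (g.solution Δ) (upperBranch τ Δ g.ε) (logSector τ (α + g.ε) β σ) := by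
  intro p hp
  rw [solution, ite_eq_left_iff, not_le]
  exact fun hρ => (g.upperBranch_eq_lowerBranch hτ hΔ
    ⟨hp.1, ⟨hp.2.1.1, by linarith [g.ρ_lt]⟩, hp.2.2⟩).symm

theorem solution_eq_lowerBranch (hτ : 0 < τ.im) (hΔ : HolomorphicDecay τ α β σ B Δ) :
    EqOn (g.solution Δ) (lowerBranch τ Δ g.ε) (logSector τ (α - τ.im) g.ρ σ) := by
  intro p hp
  rw [solution, ite_eq_right_iff]
  exact fun hρ => g.upperBranch_eq_lowerBranch hτ hΔ
    ⟨hp.1, ⟨g.lt_ρ.le.trans hρ, by linarith [hp.2.1.2, g.ρ_lt]⟩, hp.2.2⟩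

theorem solution_flow_neg_sub (hτ : 0 < τ.im) (hΔ : HolomorphicDecay τ α β σ B Δ)
    (hp : p ∈ logSector τ α β σ) : g.solution Δ (flow τ (-τ) p) - g.solution Δ p = Δ p := by
  have hτ₀ := ne_zero_of_im_pos hτ
  have hε := g.ε_pos
  have hε' := g.ε_lt
  have hρ := g.lt_ρ
  have hρ' := g.ρ_lt
  have hheight : height (flow τ (-τ) p) = height p - τ.im := by
    rw [height_flow hp.1, neg_im, sub_eq_add_neg]
  rcases lt_or_ge (height p) g.ρ with hlow | hhigh
  · rw [solution, solution, if_neg (by linarith), if_neg hlow.not_ge, lowerBranch_flow_neg hτ₀,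
      g.lowerBranch_eq_lineTransform hτ hΔ ⟨hε, hε'⟩, add_sub_cancel_left]
    exact ⟨hp.1, ⟨by linarith [hp.2.1.1], by linarith⟩, hp.2.2⟩
  rcases lt_or_ge (height (flow τ (-τ) p)) g.ρ with hlow' | hhigh'
  · rw [solution, solution, if_neg hlow'.not_ge, if_pos hhigh, lowerBranch_flow_neg hτ₀,
      g.upperBranch_eq_lineTransform hτ hΔ ⟨hε, hε'⟩, add_sub_cancel_left]
    exact ⟨hp.1, ⟨by linarith, by linarith⟩, hp.2.2⟩
  · have hshift := lineTransform_flow_neg_self (Δ := Δ) hτ₀ (-g.ε) p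
    rw [solution, solution, if_pos hhigh', if_pos hhigh, g.upperBranch_eq_lineTransform hτ hΔ
      (y := -g.ε + τ.im) ⟨by linarith, by linarith⟩, hshift, upperBranch, sub_sub_cancel]
    rw [flow_mem_logSector hτ₀, neg_im]
    exact ⟨hp.1, ⟨by linarith, by linarith [hp.2.1.2]⟩, hp.2.2⟩

theorem continuousOn_solution (hτ : 0 < τ.im) (hΔ : HolomorphicDecay τ α β σ B Δ) :
    ContinuousOn (g.solution Δ) (logSector τ (α - τ.im) β σ) := by
  have hε := g.ε_pos
  have hρ' := g.ρ_lt
  refine continuousOn_logSector_of_overlap g.lt_ρ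
    (ContinuousOn.congr (.add ?_ ?_) (g.solution_eq_lowerBranch hτ hΔ))
    (ContinuousOn.congr (.sub ?_ ?_) (g.solution_eq_upperBranch hτ hΔ))
  · exact (continuousOn_lineTransform hτ hΔ g.add_ε_ne_intCast_mul).mono
      (logSector_subset_logSector (by linarith) (by linarith))
  · refine hΔ.continuousOn.comp ((differentiable_flow τ).continuous.comp
      (by fun_prop : Continuous fun q => (τ, q))).continuousOn fun q hq => ?_
    exact (flow_mem_logSector (ne_zero_of_im_pos hτ)).2
      (logSector_subset_logSector le_rfl (by linarith) hq)
  · exact (continuousOn_lineTransform hτ hΔ g.neg_ε_ne_intCast_mul).mono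
      (logSector_subset_logSector (by linarith) (by linarith))
  · exact hΔ.continuousOn.mono (logSector_subset_logSector (by linarith) le_rfl)

theorem differentiableOn_solution (hτ : 0 < τ.im) (hΔ : HolomorphicDecay τ α β σ B Δ) :
    DifferentiableOn ℂ (g.solution Δ) (interior (logSector τ (α - τ.im) β σ)) := by
  have hε := g.ε_pos
  have hρ' := g.ρ_lt
  refine differentiableOn_interior_logSector_of_overlap g.lt_ρ
    (DifferentiableOn.congr (.add ?_ ?_)
      fun q hq => g.solution_eq_lowerBranch hτ hΔ (interior_subset hq))
    (DifferentiableOn.congr (.sub ?_ ?_)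
      fun q hq => g.solution_eq_upperBranch hτ hΔ (interior_subset hq))
  · exact (differentiableOn_lineTransform hτ hΔ g.add_ε_ne_intCast_mul).mono
      (interior_mono (logSector_subset_logSector (by linarith) (by linarith)))
  · refine hΔ.differentiableOn.comp ((differentiable_flow τ).comp
      (by fun_prop : Differentiable ℂ fun q => (τ, q))).differentiableOn fun q hq => ?_
    exact (flow_mem_interior_logSector (ne_zero_of_im_pos hτ)).2
      (interior_mono (logSector_subset_logSector le_rfl (by linarith)) hq)
  · exact (differentiableOn_lineTransform hτ hΔ g.neg_ε_ne_intCast_mul).mono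
      (interior_mono (logSector_subset_logSector (by linarith) (by linarith)))
  · exact hΔ.differentiableOn.mono
      (interior_mono (logSector_subset_logSector (by linarith) le_rfl))

end Gluing

end

/-! ### Weighted estimates -/

section

variable {τ : ℂ} {α β σ κ y G lam N θ ε : ℝ} {k : ℕ} {Δ : ℂ × ℂ → ℂ} {p : ℂ × ℂ}

theorem le_im_mul_snd (hp : p ∈ logSector τ α β σ) : α - σ ≤ (τ * p.2).im := by
  have hσ := hp.2.2
  rw [level] at hσ
  linarith [hp.2.1.1]

theorem le_norm_of_mul_le_im_mul (hτ : τ ≠ 0) {w : ℂ} {r : ℝ} (h : ‖τ‖ * r ≤ (τ * w).im) :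
    r ≤ ‖w‖ :=
  le_of_mul_le_mul_left (h.trans ((im_le_norm _).trans (norm_mul τ w).le)) (norm_pos_iff.2 hτ)

theorem integral_inv_one_add_sq_add (X : ℝ) : ∫ x : ℝ, (1 + (X + x) ^ 2)⁻¹ = Real.pi := by
  rw [integral_add_left_eq_self fun x : ℝ => (1 + x ^ 2)⁻¹, integral_univ_inv_one_add_sq]

theorem mul_le_mul_inv_one_add_sq_re {c K : ℝ} {w : ℂ} (hw : 1 ≤ (τ * w).im) (hc : 0 ≤ c)
    (hG : 0 ≤ G) (hK : K ≤ G * ‖w‖ ^ k) (hN : c * ‖w‖ ^ (k + 2) ≤ N) :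
    c * K ≤ N * G * ‖τ‖ ^ 2 * (1 + (τ * w).re ^ 2)⁻¹ := by
  have hsq : 1 + (τ * w).re ^ 2 ≤ ‖τ‖ ^ 2 * ‖w‖ ^ 2 := by
    rw [← mul_pow, ← norm_mul, ← normSq_eq_norm_sq, normSq_apply]
    nlinarith
  rw [← div_eq_mul_inv, le_div_iff₀ (by positivity)]
  calc c * K * (1 + (τ * w).re ^ 2)
      ≤ c * (G * ‖w‖ ^ k) * (‖τ‖ ^ 2 * ‖w‖ ^ 2) := by gcongr
    _ = c * ‖w‖ ^ (k + 2) * (G * ‖τ‖ ^ 2) := by ring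
    _ ≤ N * (G * ‖τ‖ ^ 2) := by gcongr
    _ = N * G * ‖τ‖ ^ 2 := by ring

theorem holomorphicDecay_of_norm_mul_pow_le (hτ : τ ≠ 0) (hσ : 1 ≤ α - σ) (hτσ : ‖τ‖ ≤ α - σ)
    (hc : ContinuousOn Δ (logSector τ α β σ))
    (hd : DifferentiableOn ℂ Δ (interior (logSector τ α β σ)))
    (hN : ∀ q ∈ logSector τ α β σ, ‖Δ q‖ * ‖q.2‖ ^ (k + 2) ≤ N) :
    HolomorphicDecay τ α β σ (N * ‖τ‖ ^ 2) Δ := by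
  refine ⟨hc, hd, fun q hq => ?_⟩
  have him := le_im_mul_snd hq
  have hone : 1 ≤ ‖q.2‖ := le_norm_of_mul_le_im_mul hτ (by linarith)
  have hle := mul_le_mul_inv_one_add_sq_re (G := 1) (K := 1) (hσ.trans him) (norm_nonneg _)
    zero_le_one (by simpa using one_le_pow₀ hone) (hN q hq)
  rwa [mul_one, mul_one] at hle

theorem norm_lineTransform_le (hτ : τ ≠ 0) (hσ : 1 ≤ α - σ) (hG : 0 ≤ G)
    (hN : ∀ q ∈ logSector τ α β σ, ‖Δ q‖ * ‖q.2‖ ^ (k + 2) ≤ N)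
    (hp : p ∈ logSector τ (α - y) (β - y) σ)
    (hker : ∀ u : ℂ, u.im = y → ‖kernel (u / τ)‖ ≤ G * ‖(flow τ u p).2‖ ^ k) :
    ‖lineTransform τ Δ y p‖ ≤ Real.pi * ‖τ‖ * G * N := by
  have hbound (x : ℝ) : ‖leafIntegrand τ Δ p (x + y * I)‖ ≤
      N * G * ‖τ‖ ^ 2 * (1 + ((τ * p.2).re + x) ^ 2)⁻¹ := by
    have hq := (flow_mem_logSector hτ (u := x + y * I)).2 (by simpa using hp)
    have hre : (τ * (flow τ (x + y * I) p).2).re = (τ * p.2).re + x := by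
      rw [mul_snd_flow hτ]
      simp
    rw [leafIntegrand, norm_mul, ← hre]
    exact mul_le_mul_inv_one_add_sq_re (hσ.trans (le_im_mul_snd hq)) (norm_nonneg _) hG
      (hker _ (by simp)) (hN _ hq)
  have hint := norm_integral_le_of_norm_le
    ((integrable_inv_one_add_sq_add (τ * p.2).re).const_mul (N * G * ‖τ‖ ^ 2))
    (Eventually.of_forall hbound)
  rw [integral_const_mul, integral_inv_one_add_sq_add] at hint
  rw [lineTransform, norm_mul, norm_inv]
  have _ := norm_pos_iff.2 hτ
  calc ‖τ‖⁻¹ * _ ≤ ‖τ‖⁻¹ * (N * G * ‖τ‖ ^ 2 * Real.pi) := by gcongr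
    _ = Real.pi * ‖τ‖ * G * N := by field_simp

/-- The condition on `lam` under which `lam` times the weighted norm of `Δ` bounds, up to a
constant, the solution at `p`: the growth of the weight along the leaf through `p`, together with
the decay of the kernel, is at least `1 / lam`. -/
def IsLeafWeight (τ : ℂ) (k : ℕ) (ε lam : ℝ) (p : ℂ × ℂ) : Prop :=
  ∀ u : ℂ, -ε ≤ u.im → 1 ≤ lam * max 1 (-(u / τ).im) * ‖(flow τ u p).2‖ ^ k

theorem IsLeafWeight.pos (hε : 0 ≤ ε) (h : IsLeafWeight τ k ε lam p) : 0 < lam := by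
  have h₀ := h 0 (by simpa using hε)
  by_contra! hlam
  exact (h₀.trans (mul_nonpos_of_nonpos_of_nonneg (mul_nonpos_of_nonpos_of_nonneg hlam
    (by positivity)) (by positivity))).not_gt one_pos

theorem norm_le_of_isLeafWeight (h : IsLeafWeight τ k ε lam p) (hlam : 0 < lam) {u : ℂ}
    (hu : -ε ≤ u.im) (huτ : (u / τ).im = 0) (hone : 1 ≤ ‖(flow τ u p).2‖)
    (hN : ‖Δ (flow τ u p)‖ * ‖(flow τ u p).2‖ ^ (k + 2) ≤ N) : ‖Δ (flow τ u p)‖ ≤ lam * N := by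
  have hweight := h u hu
  rw [huτ, neg_zero, max_eq_left zero_le_one, mul_one] at hweight
  calc ‖Δ (flow τ u p)‖ ≤ ‖Δ (flow τ u p)‖ * (lam * ‖(flow τ u p).2‖ ^ k) :=
        le_mul_of_one_le_right (norm_nonneg _) hweight
    _ ≤ ‖Δ (flow τ u p)‖ * (lam * ‖(flow τ u p).2‖ ^ (k + 2)) := by
        gcongr
        omega
    _ = lam * (‖Δ (flow τ u p)‖ * ‖(flow τ u p).2‖ ^ (k + 2)) := by ring
    _ ≤ lam * N := by gcongr

namespace Gluing

theorem norm_solution_le (g : Gluing τ α β) (hτ : 0 < τ.im) (hκ₀ : 0 ≤ κ)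
    (hκ : ∀ w, (τ * w).im = -g.ε ∨ (τ * w).im = τ.im + g.ε → ‖kernel w‖ * max 1 (-w.im) ≤ κ)
    (hσ : 1 ≤ α - σ) (hτσ : ‖τ‖ ≤ α - σ)
    (hN : ∀ q ∈ logSector τ α β σ, ‖Δ q‖ * ‖q.2‖ ^ (k + 2) ≤ N)
    (hp : p ∈ logSector τ (α - τ.im) β σ) (hlam : IsLeafWeight τ k g.ε lam p) :
    ‖g.solution Δ p‖ ≤ (Real.pi * ‖τ‖ * κ + 1) * lam * N := by
  have hτ₀ := ne_zero_of_im_pos hτ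
  have hε := g.ε_pos
  have hlam₀ := hlam.pos hε.le
  have hline (y : ℝ) (hy : y = -g.ε ∨ y = τ.im + g.ε)
      (hpy : p ∈ logSector τ (α - y) (β - y) σ) :
      ‖lineTransform τ Δ y p‖ ≤ Real.pi * ‖τ‖ * (κ * lam) * N := by
    refine norm_lineTransform_le hτ₀ hσ (by positivity) hN hpy fun u hu => ?_
    have hweight := hlam u (by rcases hy with rfl | rfl <;> linarith)
    have hker := hκ (u / τ) (by rwa [mul_div_cancel₀ _ hτ₀, hu])
    calc ‖kernel (u / τ)‖
        ≤ ‖kernel (u / τ)‖ * (lam * max 1 (-(u / τ).im) * ‖(flow τ u p).2‖ ^ k) :=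
          le_mul_of_one_le_right (norm_nonneg _) hweight
      _ = ‖kernel (u / τ)‖ * max 1 (-(u / τ).im) * (lam * ‖(flow τ u p).2‖ ^ k) := by ring
      _ ≤ κ * (lam * ‖(flow τ u p).2‖ ^ k) := by gcongr
      _ = κ * lam * ‖(flow τ u p).2‖ ^ k := by ring
  have hpoint (u : ℂ) (hu : -g.ε ≤ u.im) (huτ : (u / τ).im = 0)
      (hpu : flow τ u p ∈ logSector τ α β σ) : ‖Δ (flow τ u p)‖ ≤ lam * N := by
    refine norm_le_of_isLeafWeight hlam hlam₀ hu huτ ?_ (hN _ hpu)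
    exact le_norm_of_mul_le_im_mul hτ₀ (by linarith [le_im_mul_snd hpu])
  have hsum : (Real.pi * ‖τ‖ * κ + 1) * lam * N =
      Real.pi * ‖τ‖ * (κ * lam) * N + lam * N := by ring
  rw [hsum, solution]
  split_ifs with hρ
  · have hΔp := hpoint 0 (by simpa using hε.le) (by simp)
    rw [flow_zero] at hΔp
    refine (norm_sub_le _ _).trans (add_le_add (hline _ (Or.inl rfl) ?_) (hΔp ?_))
    · exact ⟨hp.1, ⟨by linarith [g.lt_ρ], by linarith [hp.2.1.2]⟩, hp.2.2⟩
    · exact ⟨hp.1, ⟨by linarith [g.lt_ρ], hp.2.1.2⟩, hp.2.2⟩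
  · refine (norm_add_le _ _).trans (add_le_add (hline _ (Or.inr rfl) ?_)
      (hpoint τ (by linarith) (by simp [hτ₀]) ((flow_mem_logSector hτ₀).2 ?_)))
    · exact ⟨hp.1, ⟨by linarith [hp.2.1.1], by linarith [g.ρ_lt]⟩, hp.2.2⟩
    · exact ⟨hp.1, ⟨hp.2.1.1, by linarith [g.ρ_lt]⟩, hp.2.2⟩

end Gluing

theorem one_le_norm_snd_flow (hτ : τ ≠ 0) {u : ℂ} (h : ‖τ‖ ≤ (τ * p.2).im + u.im) :
    1 ≤ ‖(flow τ u p).2‖ :=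
  le_norm_of_mul_le_im_mul hτ (by rwa [mul_one, mul_snd_flow hτ, add_im])

theorem isLeafWeight_one (hτ : τ ≠ 0) (h : ‖τ‖ + ε ≤ (τ * p.2).im) : IsLeafWeight τ k ε 1 p := by
  intro u hu
  have hone := one_le_norm_snd_flow hτ (show ‖τ‖ ≤ (τ * p.2).im + u.im by linarith)
  rw [one_mul]
  exact one_le_mul_of_one_le_of_one_le (le_max_left _ _) (one_le_pow₀ hone)

theorem isLeafWeight_two_div_im (hτ : τ ≠ 0) (h : ‖τ‖ + ε ≤ (τ * p.2).im) (hk : k ≠ 0)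
    (hξ : 0 < p.2.im) : IsLeafWeight τ k ε (2 / p.2.im) p := by
  intro u hu
  have hone := one_le_norm_snd_flow hτ (show ‖τ‖ ≤ (τ * p.2).im + u.im by linarith)
  have him : p.2.im + (u / τ).im ≤ ‖(flow τ u p).2‖ := im_le_norm (flow τ u p).2
  have hhalf : p.2.im / 2 ≤ max 1 (-(u / τ).im) * ‖(flow τ u p).2‖ := by
    rcases le_total (-(p.2.im / 2)) (u / τ).im with hs | hs
    · nlinarith [le_max_left 1 (-(u / τ).im)]
    · nlinarith [le_max_right 1 (-(u / τ).im), le_max_left 1 (-(u / τ).im)]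
  calc 1 = 2 / p.2.im * (p.2.im / 2) := by field_simp
    _ ≤ 2 / p.2.im * (max 1 (-(u / τ).im) * ‖(flow τ u p).2‖ ^ k) := by
        gcongr
        exact hhalf.trans (by gcongr; exact le_self_pow₀ hone hk)
    _ = 2 / p.2.im * max 1 (-(u / τ).im) * ‖(flow τ u p).2‖ ^ k := by ring

theorem norm_mul_norm_mul_sin_le_im_mul (hθ : 0 ≤ θ) (hθ' : θ ≤ Real.pi / 2) {ξ : ℂ}
    (h₁ : θ - arg τ ≤ arg ξ) (h₂ : arg ξ ≤ Real.pi - θ - arg τ) :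
    ‖τ‖ * (Real.sin θ * ‖ξ‖) ≤ (τ * ξ).im := by
  have hsin : Real.sin θ ≤ Real.sin (arg τ + arg ξ) := by
    rcases le_total (arg τ + arg ξ) (Real.pi / 2) with hle | hle
    · exact Real.sin_le_sin_of_le_of_le_pi_div_two (by linarith) hle (by linarith)
    · rw [← Real.sin_pi_sub (arg τ + arg ξ)]
      exact Real.sin_le_sin_of_le_of_le_pi_div_two (by linarith) (by linarith) (by linarith)
  have him : (τ * ξ).im = ‖τ‖ * (Real.sin (arg τ + arg ξ) * ‖ξ‖) := by
    rw [Real.sin_add, mul_im, ← norm_mul_cos_arg τ, ← norm_mul_sin_arg ξ]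
    linear_combination -(‖ξ‖ * Real.cos ξ.arg) * norm_mul_sin_arg τ - τ.im * norm_mul_cos_arg ξ
  rw [him]
  gcongr

theorem isLeafWeight_sector (hτ : τ ≠ 0) (hε : 2 * ε ≤ (τ * p.2).im) (hξ : p.2 ≠ 0)
    (hθ : 0 < θ) (hθ' : θ ≤ Real.pi / 2)
    (h₁ : θ - arg τ ≤ arg p.2) (h₂ : arg p.2 ≤ Real.pi - θ - arg τ) :
    IsLeafWeight τ k ε ((2 / (Real.sin θ * ‖p.2‖)) ^ k) p := by
  intro u hu
  have hsin : 0 < Real.sin θ := Real.sin_pos_of_pos_of_lt_pi hθ (by linarith)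
  have _ : 0 < ‖p.2‖ := norm_pos_iff.2 hξ
  have hlower : Real.sin θ * ‖p.2‖ / 2 ≤ ‖(flow τ u p).2‖ := by
    refine le_norm_of_mul_le_im_mul hτ ?_
    rw [mul_snd_flow hτ, add_im]
    linarith [norm_mul_norm_mul_sin_le_im_mul hθ.le hθ' h₁ h₂]
  calc (1 : ℝ) ≤ (2 / (Real.sin θ * ‖p.2‖) * ‖(flow τ u p).2‖) ^ k := by
        refine one_le_pow₀ ?_
        rw [div_mul_eq_mul_div, le_div_iff₀ (by positivity)]
        linarith
    _ = (2 / (Real.sin θ * ‖p.2‖)) ^ k * 1 * ‖(flow τ u p).2‖ ^ k := by rw [mul_pow, mul_one]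
    _ ≤ (2 / (Real.sin θ * ‖p.2‖)) ^ k * max 1 (-(u / τ).im) * ‖(flow τ u p).2‖ ^ k := by
        gcongr
        exact le_max_left _ _

end

/-! ### Uniqueness -/

section

variable {τ : ℂ} {α β σ a b δ M M' : ℝ} {D Δ h h' : ℂ × ℂ → ℂ} {p : ℂ × ℂ}

theorem apply_flow_ofReal_eq (hτ : 0 < τ.im) (hαβ : α < β)
    (hd : DifferentiableOn ℂ D (interior (logSector τ (α - τ.im) β σ)))
    (hM : ∀ q ∈ logSector τ (α - τ.im) β σ, ‖D q‖ ≤ M)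
    (hper : ∀ q ∈ logSector τ α β σ, D (flow τ (-τ) q) = D q)
    (hp : p ∈ logSector τ (α - τ.im) β σ) (hlevel : level τ p < σ) (x : ℝ) :
    D (flow τ x p) = D p := by
  have hτ₀ := ne_zero_of_im_pos hτ
  have hmem {γ : ℝ} {u : ℂ} (hγ : γ - height p ≤ u.im) (hβ : u.im ≤ β - height p) :
      flow τ u p ∈ logSector τ γ β σ :=
    (flow_mem_logSector hτ₀).2 ⟨hp.1, ⟨by linarith, by linarith⟩, hp.2.2⟩
  have hreal : ((x : ℝ) : ℂ).im ∈ Icc (α - τ.im - height p) (β - height p) := by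
    simpa using hp.2.1
  have hconst := eq_of_periodic_of_bounded_on_strip (g := fun u => D (flow τ u p)) (v := 0) hτ
    (show τ.im < β - height p - (α - τ.im - height p) by linarith) ?_
    (fun u hu => hM _ (hmem hu.1 hu.2)) (fun u hu hu' => ?_) hreal (by simpa using hp.2.1)
  · rwa [flow_zero] at hconst
  · refine hd.comp ((differentiable_flow τ).comp
      (by fun_prop : Differentiable ℂ fun u => (u, p))).differentiableOn fun u hu => ?_
    exact (flow_mem_interior_logSector hτ₀).2 (mem_interior_logSector hp.1
      (by linarith [hu.1]) (by linarith [hu.2]) hlevel)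
  · rw [← hper _ (hmem (by linarith) hu'), flow_flow, neg_add_eq_sub]

theorem exists_im_snd_flow_ofReal_eq (hτ : 0 < τ.im) (p : ℂ × ℂ) (s : ℝ) :
    ∃ x : ℝ, (flow τ x p).2.im = s := by
  have hτ₀ := ne_zero_of_im_pos hτ
  have hnorm : normSq τ ≠ 0 := normSq_eq_zero.not.2 hτ₀
  refine ⟨(p.2.im - s) * normSq τ / τ.im, ?_⟩
  rw [flow, add_im, div_eq_mul_inv, im_ofReal_mul, inv_im]
  field_simp
  ring

theorem eq_zero_of_forall_mul_sqrt_le {c : ℝ} (hc : 0 ≤ c)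
    (h : ∀ s : ℝ, 1 ≤ s → c * Real.sqrt s ≤ M) : c = 0 := by
  by_contra hne
  have hc' : 0 < c := lt_of_le_of_ne' hc hne
  have hM : |M / c| < Real.sqrt (1 + (M / c) ^ 2) := by
    rw [← Real.sqrt_sq_eq_abs]
    exact Real.sqrt_lt_sqrt (sq_nonneg _) (by linarith)
  have hle := h _ (le_add_of_nonneg_right (sq_nonneg (M / c)))
  rw [mul_comm, ← le_div_iff₀ hc'] at hle
  exact absurd (hle.trans (le_abs_self _)) hM.not_ge

/-- On a leaf of subcritical level, Liouville makes `D` constant along real times, while the real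
flow moves `Im ξ` to any prescribed value. -/
theorem eqOn_zero_of_periodic_of_decay (hτ : 0 < τ.im) (hαβ : α < β)
    (hc : ContinuousOn D (logSector τ (α - τ.im) β σ))
    (hd : DifferentiableOn ℂ D (interior (logSector τ (α - τ.im) β σ)))
    (hM : ∀ q ∈ logSector τ (α - τ.im) β σ, ‖D q‖ ≤ M)
    (hper : ∀ q ∈ logSector τ α β σ, D (flow τ (-τ) q) = D q)
    (hM' : ∀ q ∈ logSector τ (α - τ.im) β σ, 1 ≤ q.2.im → ‖D q‖ * Real.sqrt q.2.im ≤ M') :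
    EqOn D 0 (logSector τ (α - τ.im) β σ) := by
  have hτ₀ := ne_zero_of_im_pos hτ
  refine EqOn.of_subset_closure (fun p hp => ?_) hc continuousOn_const (sep_subset _ _)
    (logSector_subset_closure_level_lt hτ₀)
  refine norm_eq_zero.1 (eq_zero_of_forall_mul_sqrt_le (M := M') (norm_nonneg _) fun s hs => ?_)
  obtain ⟨x, rfl⟩ := exists_im_snd_flow_ofReal_eq hτ p s
  rw [← apply_flow_ofReal_eq hτ hαβ hd hM hper hp.1 hp.2 x]
  exact hM' _ ((flow_mem_logSector hτ₀).2 (by simpa using hp.1)) hs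

theorem linSolProp_unique (hτ : 0 < τ.im) (ha : 0 < a) (hab : a < b) (hδ : 0 < δ)
    (hh : linSolProp τ a b δ Δ h) (hh' : linSolProp τ a b δ Δ h') :
    EqOn h h' (sectDom' τ a b δ) := by
  have hb := ha.trans hab
  obtain ⟨hc, hd, ⟨M, hM⟩, heq, ⟨K, hK⟩⟩ := hh
  obtain ⟨hc', hd', ⟨M', hM'⟩, heq', ⟨K', hK'⟩⟩ := hh'
  simp only [sectDom_eq_logSector τ ha hb hδ, sectDom'_eq_logSector τ ha hb hδ,
    ← flow_neg_self (ne_zero_of_im_pos hτ)] at *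
  have hzero := eqOn_zero_of_periodic_of_decay (D := fun q => h q - h' q) (M := M + M')
    (M' := K + K') hτ ((logScale_lt_logScale ha hb).2 hab) (hc.sub hc') (hd.sub hd')
    (fun q hq => (norm_sub_le _ _).trans (add_le_add (hM q hq) (hM' q hq)))
    (fun q hq => by linear_combination heq q hq - heq' q hq) fun q hq him => ?_
  · exact fun q hq => sub_eq_zero.1 (hzero hq)
  · calc ‖h q - h' q‖ * Real.sqrt q.2.im ≤ (‖h q‖ + ‖h' q‖) * Real.sqrt q.2.im := by
          gcongr
          exact norm_sub_le _ _
      _ = ‖h q‖ * Real.sqrt q.2.im + ‖h' q‖ * Real.sqrt q.2.im := add_mul _ _ _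
      _ ≤ K + K' := add_le_add (hK q hq him) (hK' q hq him)

end

/-! ### Existence -/

section

/-- A level so low that every leaf of `logSector τ (α - τ.im) β σ` with `σ ≤ deepLevel τ α` stays at
distance at least `1` from the zero of the weight `‖ξ‖` on the lines used in the gluing. -/
noncomputable def deepLevel (τ : ℂ) (α : ℝ) : ℝ := α - τ.im - (1 + 2 * ‖τ‖)

variable {τ : ℂ} {α β σ a b δ κ N θ : ℝ} {k : ℕ} {Δ : ℂ × ℂ → ℂ} {p : ℂ × ℂ}

theorem logScale_add_im_lt_logScale (ha : 0 < a) (hab : a < ‖exp (2 * Real.pi * I * τ)‖ * b) :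
    logScale a + τ.im < logScale b := by
  have hb : 0 < b := pos_of_mul_pos_right (ha.trans hab) (norm_nonneg _)
  rw [← lt_sub_iff_add_lt, ← logScale_norm_exp_mul τ hb]
  exact (logScale_lt_logScale ha (ha.trans hab)).2 hab

theorem one_le_sub_of_le_deepLevel (hτ : 0 < τ.im) (hσ : σ ≤ deepLevel τ α) : 1 ≤ α - σ := by
  rw [deepLevel] at hσ
  linarith [norm_nonneg τ]

theorem norm_le_sub_of_le_deepLevel (hτ : 0 < τ.im) (hσ : σ ≤ deepLevel τ α) : ‖τ‖ ≤ α - σ := by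
  rw [deepLevel] at hσ
  linarith [norm_nonneg τ]

theorem one_add_le_im_mul_snd (hσ : σ ≤ deepLevel τ α) (hp : p ∈ logSector τ (α - τ.im) β σ) :
    1 + 2 * ‖τ‖ ≤ (τ * p.2).im := by
  have him := le_im_mul_snd hp
  rw [deepLevel] at hσ
  linarith

namespace Gluing

variable (g : Gluing τ α β)

theorem ε_le_norm : g.ε ≤ ‖τ‖ := g.ε_lt.le.trans (im_le_norm τ)

section Estimates

variable (hτ : 0 < τ.im) (hκ₀ : 0 ≤ κ)
  (hκ : ∀ w, (τ * w).im = -g.ε ∨ (τ * w).im = τ.im + g.ε → ‖kernel w‖ * max 1 (-w.im) ≤ κ)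
  (hσ : σ ≤ deepLevel τ α) (hN : ∀ q ∈ logSector τ α β σ, ‖Δ q‖ * ‖q.2‖ ^ (k + 2) ≤ N)
  (hp : p ∈ logSector τ (α - τ.im) β σ)

include hτ hκ₀ hκ hσ hN hp

theorem norm_solution_le_const_mul : ‖g.solution Δ p‖ ≤ (Real.pi * ‖τ‖ * κ + 1) * N := by
  have hτ₀ := ne_zero_of_im_pos hτ
  have him := one_add_le_im_mul_snd hσ hp
  simpa only [mul_one] using g.norm_solution_le hτ hκ₀ hκ (one_le_sub_of_le_deepLevel hτ hσ)
    (norm_le_sub_of_le_deepLevel hτ hσ) hN hp (isLeafWeight_one hτ₀ (by linarith [g.ε_le_norm]))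

theorem norm_solution_le_div_im (hk : k ≠ 0) (hξ : 0 < p.2.im) :
    ‖g.solution Δ p‖ ≤ 2 * (Real.pi * ‖τ‖ * κ + 1) * N / p.2.im := by
  have hτ₀ := ne_zero_of_im_pos hτ
  have him := one_add_le_im_mul_snd hσ hp
  calc ‖g.solution Δ p‖ ≤ (Real.pi * ‖τ‖ * κ + 1) * (2 / p.2.im) * N :=
        g.norm_solution_le hτ hκ₀ hκ (one_le_sub_of_le_deepLevel hτ hσ)
          (norm_le_sub_of_le_deepLevel hτ hσ) hN hp
          (isLeafWeight_two_div_im hτ₀ (by linarith [g.ε_le_norm]) hk hξ)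
    _ = 2 * (Real.pi * ‖τ‖ * κ + 1) * N / p.2.im := by ring

theorem norm_solution_le_div_sqrt_im (hk : k ≠ 0) (hξ : 1 ≤ p.2.im) :
    ‖g.solution Δ p‖ ≤ 2 * (Real.pi * ‖τ‖ * κ + 1) * N / Real.sqrt p.2.im := by
  have hdiv := g.norm_solution_le_div_im hτ hκ₀ hκ hσ hN hp hk (by linarith)
  have hnum : 0 ≤ 2 * (Real.pi * ‖τ‖ * κ + 1) * N := by
    linarith [(norm_nonneg _).trans (g.norm_solution_le_const_mul hτ hκ₀ hκ hσ hN hp)]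
  refine hdiv.trans (div_le_div_of_nonneg_left hnum (by positivity) ?_)
  exact Real.sqrt_le_self_iff.2 (Or.inr hξ)

theorem norm_solution_le_div_norm_pow (hθ : 0 < θ) (hθ' : θ ≤ Real.pi / 2)
    (h₁ : θ - arg τ ≤ arg p.2) (h₂ : arg p.2 ≤ Real.pi - θ - arg τ) :
    ‖g.solution Δ p‖ ≤
      (Real.pi * ‖τ‖ * κ + 1) * (2 / Real.sin θ) ^ k * N / ‖p.2‖ ^ k := by
  have hτ₀ := ne_zero_of_im_pos hτ
  have him := one_add_le_im_mul_snd hσ hp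
  have hξ : p.2 ≠ 0 := by
    intro h
    rw [h, mul_zero, zero_im] at him
    linarith [norm_nonneg τ]
  calc ‖g.solution Δ p‖
      ≤ (Real.pi * ‖τ‖ * κ + 1) * (2 / (Real.sin θ * ‖p.2‖)) ^ k * N :=
        g.norm_solution_le hτ hκ₀ hκ (one_le_sub_of_le_deepLevel hτ hσ)
          (norm_le_sub_of_le_deepLevel hτ hσ) hN hp
          (isLeafWeight_sector hτ₀ (by linarith [g.ε_le_norm]) hξ hθ hθ' h₁ h₂)
    _ = (Real.pi * ‖τ‖ * κ + 1) * (2 / Real.sin θ) ^ k * N / ‖p.2‖ ^ k := by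
        rw [← div_div, div_pow _ ‖p.2‖]
        ring

end Estimates

theorem linSolProp_solution (g : Gluing τ (logScale a) (logScale b)) (hτ : 0 < τ.im) (ha : 0 < a)
    (hb : 0 < b) (hδ : 0 < δ) (hκ₀ : 0 ≤ κ)
    (hκ : ∀ w, (τ * w).im = -g.ε ∨ (τ * w).im = τ.im + g.ε → ‖kernel w‖ * max 1 (-w.im) ≤ κ)
    (hσ : logScale δ ≤ deepLevel τ (logScale a)) (hc : ContinuousOn Δ (sectDom τ a b δ))
    (hd : DifferentiableOn ℂ Δ (interior (sectDom τ a b δ)))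
    (hN : ∀ q ∈ sectDom τ a b δ, ‖Δ q‖ * ‖q.2‖ ^ (k + 2) ≤ N) (hk : k ≠ 0) :
    linSolProp τ a b δ Δ (g.solution Δ) := by
  have hτ₀ := ne_zero_of_im_pos hτ
  simp only [linSolProp, sectDom_eq_logSector τ ha hb hδ, sectDom'_eq_logSector τ ha hb hδ,
    ← flow_neg_self hτ₀] at hc hd hN ⊢
  have hΔ := holomorphicDecay_of_norm_mul_pow_le hτ₀ (one_le_sub_of_le_deepLevel hτ hσ)
    (norm_le_sub_of_le_deepLevel hτ hσ) hc hd hN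
  exact ⟨g.continuousOn_solution hτ hΔ, g.differentiableOn_solution hτ hΔ,
    ⟨_, fun q hq => g.norm_solution_le_const_mul hτ hκ₀ hκ hσ hN hq⟩,
    fun q hq => g.solution_flow_neg_sub hτ hΔ hq,
    ⟨_, fun q hq him => (le_div_iff₀ (Real.sqrt_pos.2 (by linarith))).1
      (g.norm_solution_le_div_sqrt_im hτ hκ₀ hκ hσ hN hq hk him)⟩⟩

end Gluing

end

end Sectorial

open Sectorial

/-- resolution of the linearized (homological) equation on the sectorial
domains `S_δ`, with uniqueness, uniform bounds `C‖Δ‖_m`, decay `C‖Δ‖_m/√(Im ξ)`, and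
`D_θ‖Δ‖_m/|ξ|^{m−2}` decay on subsectors `θ − ϖ ≤ arg ξ ≤ π − θ − ϖ`, `ϖ = arg τ`. -/
theorem statement14 (τ : ℂ) (hτ : 0 < τ.im) (a b : ℝ) (ha : 0 < a) (hab : a < b)
    (haqb : a < ‖Complex.exp (2 * (Real.pi : ℂ) * Complex.I * τ)‖ * b)
    (m : ℕ) (hm : 3 ≤ m) :
    ∃ δ₀ C : ℝ, 0 < δ₀ ∧ 0 < C ∧ ∃ Dfun : ℝ → ℝ,
      (∀ θ : ℝ, 0 < θ → θ ≤ Real.pi / 2 → 0 < Dfun θ) ∧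
      ∀ δ : ℝ, 0 < δ → δ ≤ δ₀ →
        ∀ Δ : ℂ × ℂ → ℂ,
          ContinuousOn Δ (sectDom τ a b δ) →
          DifferentiableOn ℂ Δ (interior (sectDom τ a b δ)) →
          BddAbove ((fun p : ℂ × ℂ => ‖Δ p‖ * ‖p.2‖ ^ m) ''
            sectDom τ a b δ) →
          ∃ h : ℂ × ℂ → ℂ,
            linSolProp τ a b δ Δ h ∧
            (∀ h' : ℂ × ℂ → ℂ, linSolProp τ a b δ Δ h' →
              ∀ p ∈ sectDom' τ a b δ, h' p = h p) ∧
            (∀ p ∈ sectDom' τ a b δ,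
              ‖h p‖ ≤
                C * sSup ((fun p : ℂ × ℂ =>
                    ‖Δ p‖ * ‖p.2‖ ^ m) '' sectDom τ a b δ)) ∧
            (∀ p ∈ sectDom' τ a b δ, 1 ≤ p.2.im →
              ‖h p‖ ≤
                C * sSup ((fun p : ℂ × ℂ =>
                    ‖Δ p‖ * ‖p.2‖ ^ m) '' sectDom τ a b δ) /
                  Real.sqrt p.2.im) ∧
            (∀ θ : ℝ, 0 < θ → θ ≤ Real.pi / 2 →
              ∀ p ∈ sectDom' τ a b δ,
                θ - Complex.arg τ ≤ Complex.arg p.2 →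
                Complex.arg p.2 ≤ Real.pi - θ - Complex.arg τ →
                ‖h p‖ ≤
                  Dfun θ * sSup ((fun p : ℂ × ℂ =>
                      ‖Δ p‖ * ‖p.2‖ ^ m) '' sectDom τ a b δ) /
                    ‖p.2‖ ^ (m - 2)) := by
  obtain ⟨k, rfl⟩ : ∃ k, m = k + 2 := ⟨m - 2, by omega⟩
  have hb : 0 < b := ha.trans hab
  obtain ⟨g⟩ := Gluing.nonempty hτ (logScale_add_im_lt_logScale ha haqb)
  obtain ⟨κ, hκ₀, hκ⟩ := g.exists_norm_kernel_mul_max_le hτ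
  refine ⟨Real.exp (2 * Real.pi * deepLevel τ (logScale a)),
    2 * (Real.pi * ‖τ‖ * κ + 1), Real.exp_pos _, by positivity,
    fun θ => (Real.pi * ‖τ‖ * κ + 1) * (2 / Real.sin θ) ^ k, fun θ hθ hθ' => ?_,
    fun δ hδ hδ₀ Δ hc hd hbdd => ?_⟩
  · have hsin := Real.sin_pos_of_pos_of_lt_pi hθ (by linarith)
    positivity
  have hσ : logScale δ ≤ deepLevel τ (logScale a) := by
    rwa [← logScale_exp (deepLevel τ _), logScale_le_logScale hδ (Real.exp_pos _)]
  have hN (q) (hq : q ∈ sectDom τ a b δ) := le_csSup hbdd (Set.mem_image_of_mem _ hq)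
  have hsol := g.linSolProp_solution hτ ha hb hδ hκ₀ hκ hσ hc hd hN (by omega)
  refine ⟨g.solution Δ, hsol, fun h' hh' => linSolProp_unique hτ ha hab hδ hh' hsol, ?_⟩
  simp only [sectDom_eq_logSector τ ha hb hδ, sectDom'_eq_logSector τ ha hb hδ,
    Nat.add_sub_cancel] at hN ⊢
  refine ⟨fun p hp => ?_,
    fun p hp => g.norm_solution_le_div_sqrt_im hτ hκ₀ hκ hσ hN hp (by omega),
    fun θ hθ hθ' p hp => g.norm_solution_le_div_norm_pow hτ hκ₀ hκ hσ hN hp hθ hθ'⟩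
  have hle := g.norm_solution_le_const_mul hτ hκ₀ hκ hσ hN hp
  linarith [(norm_nonneg _).trans hle]
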